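/- Let Ω ⊂ ℝⁿ (n ≥ 2) be a bounded polyhedral domain with singular set S ≠ ∅ and η(x) = dist(x, S), and let μ ≥ 1 be an integer. Then there exists a constant C > 0 such that for every function u : ℝⁿ → ℝ that is smooth on Ω, continuous on the closure of Ω, vanishes on ∂Ω, and satisfies ‖u‖_{K^1_1(Ω)} < ∞ and ‖Δu‖_{K^{μ−1}_{−1}(Ω)} < ∞, one has ‖u‖_{K^{μ+1}_1(Ω)} < ∞ and ‖u‖_{K^{μ+1}_1(Ω)} ≤ C ( ‖Δu‖_{K^{μ−1}_{−1}(Ω)} + ‖u‖_{K^0_1(Ω)} ). -/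

import Mathlib

open MeasureTheory Set Metric
open scoped RealInnerProductSpace ENNReal

noncomputable section

/-- `H` is an affine hyperplane in `ℝⁿ`. -/
def IsAffineHyperplane {n : ℕ} (H : Set (EuclideanSpace ℝ (Fin n))) : Prop :=
  ∃ (v : EuclideanSpace ℝ (Fin n)) (c : ℝ), v ≠ 0 ∧ H = {x | ⟪v, x⟫ = c}

/-- `Ω` is a bounded polyhedral domain with boundary contained in the union of the minimal
finite family `𝓗` of affine hyperplanes. -/
structure IsPolyhedralDomain {n : ℕ} (Ω : Set (EuclideanSpace ℝ (Fin n)))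
    (𝓗 : Finset (Set (EuclideanSpace ℝ (Fin n)))) : Prop where
  isOpen : IsOpen Ω
  isBounded : Bornology.IsBounded Ω
  frontier_closure : frontier Ω = frontier (closure Ω)
  hyperplane : ∀ H ∈ 𝓗, IsAffineHyperplane H
  subset_union : frontier Ω ⊆ ⋃ H ∈ 𝓗, H
  minimal : ∀ 𝓗' ⊂ 𝓗, ¬ frontier Ω ⊆ ⋃ H ∈ 𝓗', H

/-- The set of singular boundary points: boundary points lying on at least two
distinct hyperplanes of the family `𝓗`. -/
def polySingularSet {n : ℕ} (Ω : Set (EuclideanSpace ℝ (Fin n)))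
    (𝓗 : Finset (Set (EuclideanSpace ℝ (Fin n)))) : Set (EuclideanSpace ℝ (Fin n)) :=
  {x | x ∈ frontier Ω ∧ ∃ H₁ ∈ 𝓗, ∃ H₂ ∈ 𝓗, H₁ ≠ H₂ ∧ x ∈ H₁ ∧ x ∈ H₂}

/-- Iterated partial derivative along a list of coordinate directions. -/
def derivAlong {n : ℕ} : List (Fin n) → (EuclideanSpace ℝ (Fin n) → ℝ) →
    EuclideanSpace ℝ (Fin n) → ℝ
  | [], u => u
  | i :: L, u => fun x => fderiv ℝ (derivAlong L u) x (EuclideanSpace.single i 1)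

/-- The iterated partial derivative `∂^β` associated to a multi-index `β`. -/
def pderivMulti {n : ℕ} (β : Fin n → ℕ) (u : EuclideanSpace ℝ (Fin n) → ℝ) :
    EuclideanSpace ℝ (Fin n) → ℝ :=
  derivAlong ((List.finRange n).flatMap fun i => List.replicate (β i) i) u

/-- The finite set of multi-indices `β : Fin n → ℕ` with `|β| = ∑ i, β i ≤ m`. -/
def multiIndicesLE (n m : ℕ) : Finset (Fin n → ℕ) :=
  ((Finset.univ : Finset (Fin n → Fin (m + 1))).filter
    (fun γ => ∑ i, (γ i : ℕ) ≤ m)).image (fun γ i => (γ i : ℕ))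

/-- The squared Babuška–Kondratiev norm `‖u‖²_{K^μ_a(Ω)}` with weight the distance to `S`. -/
def KnormSq {n : ℕ} (Ω S : Set (EuclideanSpace ℝ (Fin n))) (μ : ℕ) (a : ℝ)
    (u : EuclideanSpace ℝ (Fin n) → ℝ) : ℝ≥0∞ :=
  ∑ β ∈ multiIndicesLE n μ, ∫⁻ x in Ω,
    ENNReal.ofReal (infDist x S ^ (2 * (((∑ i, β i : ℕ) : ℝ) - a)) * pderivMulti β u x ^ 2)

/-- The Laplace operator `Δu = ∑ⱼ ∂²u/∂xⱼ²`. -/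
def laplaceOp {n : ℕ} (u : EuclideanSpace ℝ (Fin n) → ℝ) :
    EuclideanSpace ℝ (Fin n) → ℝ :=
  fun x => ∑ j : Fin n, derivAlong [j, j] u x

/-! ### Part A: iterated directional derivatives -/
namespace KR
open Filter Topology
open scoped ContDiff

section calcsec
variable {E : Type*} [NormedAddCommGroup E] [NormedSpace ℝ E]

/-- Iterated directional derivative along a list of vectors. -/
def dl : List E → (E → ℝ) → E → ℝ
  | [], u => u
  | v :: L, u => fun x => fderiv ℝ (dl L u) x v

lemma dl_nil (u : E → ℝ) : dl [] u = u := rfl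

lemma dl_cons (v : E) (L : List E) (u : E → ℝ) :
    dl (v :: L) u = fun x => fderiv ℝ (dl L u) x v := rfl

lemma dl_append (L M : List E) (u : E → ℝ) : dl (L ++ M) u = dl L (dl M u) := by
  induction L with
  | nil => rfl
  | cons v L ih => simp only [List.cons_append, dl_cons, ih]

lemma dl_contDiffOn {G : Set E} (hG : IsOpen G) {u : E → ℝ} (hu : ContDiffOn ℝ ∞ u G)
    (L : List E) : ContDiffOn ℝ ∞ (dl L u) G := by
  induction L with
  | nil => exact hu
  | cons v L ih =>
    rw [dl_cons]
    exact (ih.fderiv_of_isOpen hG (by simp)).clm_apply contDiffOn_const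

lemma dl_congr {G : Set E} (hG : IsOpen G) {u v : E → ℝ} (h : EqOn u v G) (L : List E) :
    EqOn (dl L u) (dl L v) G := by
  induction L with
  | nil => exact h
  | cons w L ih =>
    intro x hx
    have : dl L u =ᶠ[𝓝 x] dl L v := by
      filter_upwards [hG.mem_nhds hx] with z hz using ih hz
    simp only [dl_cons, this.fderiv_eq]

lemma dl_swap {G : Set E} (hG : IsOpen G) {u : E → ℝ} (hu : ContDiffOn ℝ ∞ u G)
    (v w : E) : EqOn (dl [v, w] u) (dl [w, v] u) G := by
  intro x hx
  have hux : ContDiffAt ℝ ∞ u x := hu.contDiffAt (hG.mem_nhds hx)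
  have hs : IsSymmSndFDerivAt ℝ u x := hux.isSymmSndFDerivAt (by simp; norm_cast)
  have hd : DifferentiableAt ℝ (fderiv ℝ u) x :=
    (hux.fderiv_right (m := 1) (by norm_cast)).differentiableAt (by simp)
  have key : ∀ a b : E, dl [a, b] u x = fderiv ℝ (fderiv ℝ u) x a b := by
    intro a b
    simp only [dl_cons, dl_nil]
    rw [fderiv_clm_apply hd (differentiableAt_const b)]
    simp
  rw [key, key]
  exact hs v w

lemma dl_perm {G : Set E} (hG : IsOpen G) {u : E → ℝ} (hu : ContDiffOn ℝ ∞ u G)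
    {L M : List E} (h : L.Perm M) : EqOn (dl L u) (dl M u) G := by
  induction h with
  | nil => exact fun x _ => rfl
  | cons v _ ih => exact dl_congr hG ih [v]
  | swap v w L =>
    have := dl_swap hG (dl_contDiffOn hG hu L) w v
    rw [← dl_append, ← dl_append] at this
    exact this
  | trans _ _ h1 h2 => exact h1.trans h2

lemma dl_translate (a : E) (u : E → ℝ) (L : List E) :
    dl L (fun x => u (x + a)) = fun x => dl L u (x + a) := by
  induction L with
  | nil => rfl
  | cons v L ih =>
    ext x
    simp only [dl_cons, ih, fderiv_comp_add_right]

lemma dl_sub {G : Set E} (hG : IsOpen G) {u v : E → ℝ} (hu : ContDiffOn ℝ ∞ u G)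
    (hv : ContDiffOn ℝ ∞ v G) (L : List E) :
    EqOn (dl L (fun x => u x - v x)) (fun x => dl L u x - dl L v x) G := by
  induction L with
  | nil => exact fun x _ => rfl
  | cons w L ih =>
    intro x hx
    have h1 := dl_congr hG ih [w] hx
    have hdu := ((dl_contDiffOn hG hu L).contDiffAt (hG.mem_nhds hx)).differentiableAt (by simp)
    have hdv := ((dl_contDiffOn hG hv L).contDiffAt (hG.mem_nhds hx)).differentiableAt (by simp)
    simp only [dl_cons, dl_nil] at h1 ⊢
    rw [h1, fderiv_fun_sub hdu hdv]
    simp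

lemma dl_const_mul {G : Set E} (hG : IsOpen G) {u : E → ℝ} (hu : ContDiffOn ℝ ∞ u G)
    (c : ℝ) (L : List E) :
    EqOn (dl L (fun x => c * u x)) (fun x => c * dl L u x) G := by
  induction L with
  | nil => exact fun x _ => rfl
  | cons w L ih =>
    intro x hx
    have h1 := dl_congr hG ih [w] hx
    have hdu := ((dl_contDiffOn hG hu L).contDiffAt (hG.mem_nhds hx)).differentiableAt (by simp)
    simp only [dl_cons, dl_nil] at h1 ⊢
    rw [h1, fderiv_const_mul hdu]
    simp

lemma dl_sum {G : Set E} (hG : IsOpen G) {ι : Type*} (s : Finset ι) {u : ι → E → ℝ}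
    (hu : ∀ i, ContDiffOn ℝ ∞ (u i) G) (L : List E) :
    EqOn (dl L (fun x => ∑ i ∈ s, u i x)) (fun x => ∑ i ∈ s, dl L (u i) x) G := by
  induction L with
  | nil => exact fun x _ => rfl
  | cons w L ih =>
    intro x hx
    have h1 := dl_congr hG ih [w] hx
    have hdu := fun i => ((dl_contDiffOn hG (hu i) L).contDiffAt
      (hG.mem_nhds hx)).differentiableAt (by simp)
    simp only [dl_cons, dl_nil] at h1 ⊢
    rw [h1, fderiv_fun_sum (fun i _ => hdu i)]
    simp

/-- the difference quotient -/
def dq (h : ℝ) (b : E) (u : E → ℝ) : E → ℝ := fun x => h⁻¹ * (u (x + h • b) - u x)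

lemma dl_dq {G G' : Set E} (hG : IsOpen G) (hG' : IsOpen G') {u : E → ℝ}
    (hu : ContDiffOn ℝ ∞ u G') (h : ℝ) (b : E) (hs : ∀ x ∈ G, x + h • b ∈ G') (hGG : G ⊆ G')
    (L : List E) : EqOn (dl L (dq h b u)) (dq h b (dl L u)) G := by
  have h2 : ContDiffOn ℝ ∞ (fun x => u (x + h • b)) G :=
    hu.comp (contDiff_id.add contDiff_const).contDiffOn hs
  have h1 := hu.mono hGG
  intro x hx
  unfold dq
  rw [dl_const_mul hG (h2.sub h1) _ L hx]
  beta_reduce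
  rw [dl_sub hG h2 h1 L hx, dl_translate]

lemma dq_contDiffOn {G G' : Set E} {u : E → ℝ}
    (hu : ContDiffOn ℝ ∞ u G') (h : ℝ) (b : E) (hs : ∀ x ∈ G, x + h • b ∈ G') (hGG : G ⊆ G') :
    ContDiffOn ℝ ∞ (dq h b u) G := by
  have h2 : ContDiffOn ℝ ∞ (fun x => u (x + h • b)) G :=
    hu.comp (contDiff_id.add contDiff_const).contDiffOn hs
  exact contDiffOn_const.mul (h2.sub (hu.mono hGG))

lemma dq_tendsto {u : E → ℝ} {x : E} (hu : DifferentiableAt ℝ u x) (b : E)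
    {h : ℕ → ℝ} (hh : Tendsto h atTop (𝓝 0)) (hne : ∀ k, h k ≠ 0) :
    Tendsto (fun k => dq (h k) b u x) atTop (𝓝 (fderiv ℝ u x b)) := by
  have h1 := (hu.hasFDerivAt.hasLineDerivAt b)
  have h2 := hasDerivAt_iff_tendsto_slope_zero.1 h1
  have h3 : Tendsto h atTop (𝓝[≠] 0) :=
    tendsto_nhdsWithin_iff.2 ⟨hh, Eventually.of_forall hne⟩
  have := h2.comp h3
  simpa [dq, Function.comp_def] using this

/-- the operator `∑ D_{b_i}²` -/
def Lop {ι : Type*} [Fintype ι] (b : ι → E) (u : E → ℝ) : E → ℝ :=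
  fun x => ∑ i, dl [b i, b i] u x

lemma Lop_contDiffOn {ι : Type*} [Fintype ι] (b : ι → E) {G : Set E} (hG : IsOpen G) {u : E → ℝ}
    (hu : ContDiffOn ℝ ∞ u G) : ContDiffOn ℝ ∞ (Lop b u) G :=
  ContDiffOn.sum fun i _ => dl_contDiffOn hG hu _

lemma Lop_dq {ι : Type*} [Fintype ι] (bb : ι → E) {G G' : Set E} (hG : IsOpen G)
    (hG' : IsOpen G') {u : E → ℝ}
    (hu : ContDiffOn ℝ ∞ u G') (h : ℝ) (b : E) (hs : ∀ x ∈ G, x + h • b ∈ G') (hGG : G ⊆ G') :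
    EqOn (Lop bb (dq h b u)) (dq h b (Lop bb u)) G := by
  intro x hx
  simp only [Lop]
  rw [Finset.sum_congr rfl fun i _ => dl_dq hG hG' hu h b hs hGG [bb i, bb i] hx]
  simp only [dq, Lop, Finset.mul_sum, mul_sub, Finset.sum_sub_distrib]

end calcsec
end KR

/-! ### Part B: analytic auxiliary lemmas -/
namespace KR
open Filter Topology
open scoped ContDiff

/-- truncation function -/
lemma exists_phi {ε : ℝ} (hε : 0 < ε) : ∃ φ : ℝ → ℝ, ContDiff ℝ ∞ φ ∧ (∀ t, |t| < ε → φ t = 0) ∧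
    (∀ t, 0 ≤ deriv φ t) ∧ (∀ t, deriv φ t ≤ 1) ∧ (∀ t, φ t ^ 2 ≤ t ^ 2 * deriv φ t) ∧
    (∀ t, 2 * ε ≤ |t| → deriv φ t = 1) := by
  set g : ℝ → ℝ := fun t => Real.smoothTransition ((t / ε) ^ 2 - 1) with hg
  have hgs : ContDiff ℝ ∞ g :=
    Real.smoothTransition.contDiff.comp (((contDiff_id.div_const ε).pow 2).sub contDiff_const)
  have hgc : Continuous g := hgs.continuous
  set φ : ℝ → ℝ := fun t => ∫ s in (0 : ℝ)..t, g s with hφ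
  have hd : ∀ t, HasDerivAt φ (g t) t := fun t =>
    intervalIntegral.integral_hasDerivAt_right (hgc.intervalIntegrable _ _)
      (hgc.stronglyMeasurableAtFilter _ _) hgc.continuousAt
  have hderiv : deriv φ = g := funext fun t => (hd t).deriv
  have hg0 : ∀ t, 0 ≤ g t := fun t => Real.smoothTransition.nonneg _
  have hg1 : ∀ t, g t ≤ 1 := fun t => Real.smoothTransition.le_one _
  have hmono : ∀ s t, |s| ≤ |t| → g s ≤ g t := by
    intro s t hst
    apply Real.smoothTransition.monotone
    have : (s / ε) ^ 2 ≤ (t / ε) ^ 2 := by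
      rw [div_pow, div_pow]
      have := sq_le_sq.2 hst
      gcongr
    linarith
  have hbound : ∀ t, |φ t| ≤ g t * |t| := by
    intro t
    have := intervalIntegral.norm_integral_le_of_norm_le_const (f := g) (a := 0) (b := t)
      (C := g t) ?_
    · simpa using this
    · intro x hx
      rw [Real.norm_of_nonneg (hg0 x)]
      apply hmono
      rcases le_total 0 t with h | h
      · rw [uIoc_of_le h] at hx
        rw [abs_of_pos hx.1, abs_of_nonneg h]; exact hx.2
      · rw [uIoc_of_ge h] at hx
        rw [abs_of_nonpos hx.2, abs_of_nonpos h]; linarith [hx.1]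
  refine ⟨φ, ?_, ?_, ?_, ?_, ?_, ?_⟩
  · rw [contDiff_infty_iff_deriv, hderiv]
    exact ⟨fun t => (hd t).differentiableAt, hgs⟩
  · intro t ht
    have h0 : g t = 0 := by
      apply Real.smoothTransition.zero_of_nonpos
      have : |t / ε| ≤ 1 := by
        rw [abs_div, abs_of_pos hε, div_le_one hε]; exact ht.le
      have := (sq_le_one_iff_abs_le_one _).2 this
      linarith
    have := hbound t
    rw [h0, zero_mul] at this
    exact abs_eq_zero.1 (le_antisymm this (abs_nonneg _))
  · rw [hderiv]; exact hg0
  · rw [hderiv]; exact hg1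
  · intro t
    rw [hderiv, ← sq_abs (φ t), ← sq_abs t]
    have h1 := hbound t
    have h2 : |φ t| ^ 2 ≤ (g t * |t|) ^ 2 := by gcongr
    have h3 : g t ^ 2 ≤ g t := by nlinarith [hg0 t, hg1 t]
    nlinarith [sq_nonneg |t|]
  · intro t ht
    rw [hderiv]
    apply Real.smoothTransition.one_of_one_le
    have : 2 ≤ |t / ε| := by
      rw [abs_div, abs_of_pos hε, le_div_iff₀ hε]; exact ht
    have h2 : (2:ℝ) ^ 2 ≤ |t / ε| ^ 2 := by gcongr
    rw [sq_abs] at h2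
    linarith

section meas
set_option linter.unusedSectionVars false
variable {E : Type*} [NormedAddCommGroup E] [NormedSpace ℝ E] [FiniteDimensional ℝ E]
  [MeasurableSpace E] [BorelSpace E] (μ : Measure E) [μ.IsAddHaarMeasure]

/-- On the zero set the derivative vanishes a.e. -/
lemma ae_zero_level {G : Set E} (hG : IsOpen G) {w : E → ℝ} (hw : ContDiffOn ℝ ∞ w G) :
    ∀ᵐ x ∂(μ.restrict G), w x = 0 → fderiv ℝ w x = 0 := by
  rcases subsingleton_or_nontrivial E with hE | hE
  · refine Eventually.of_forall fun x _ => ?_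
    ext v
    rw [Subsingleton.elim v 0]; simp
  obtain ⟨b, hb⟩ := exists_ne (0 : E)
  set s : Set E := G ∩ {x | w x = 0} with hs
  have hms : MeasurableSet s := by
    have : MeasurableSet (G ∩ w ⁻¹' {0}ᶜ) :=
      (hw.continuousOn.isOpen_inter_preimage hG isOpen_compl_singleton).measurableSet
    have h2 : s = G \ (G ∩ w ⁻¹' {0}ᶜ) := by
      ext x; simp only [hs, mem_inter_iff, mem_ofPred_eq, Set.mem_sdiff, mem_preimage, mem_compl_iff,
        mem_singleton_iff]; tauto
    rw [h2]; exact hG.measurableSet.diff this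
  have hA : ApproximatesLinearOn (fun x => w x • b) (0 : E →L[ℝ] E) s 0 := by
    intro x hx y hy
    have h1 : w x = 0 := hx.2
    have h2 : w y = 0 := hy.2
    simp [h1, h2]
  have := hA.norm_fderiv_sub_le μ hms (fun x => (fderiv ℝ w x).smulRight b) (by
    intro x hx
    have hd : HasFDerivAt w (fderiv ℝ w x) x :=
      ((hw.contDiffAt (hG.mem_nhds hx.1)).differentiableAt (by simp)).hasFDerivAt
    exact (hd.smul_const b).hasFDerivWithinAt)
  rw [ae_restrict_iff' hms] at this
  rw [ae_restrict_iff' hG.measurableSet]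
  filter_upwards [this] with x hx hxG hx0
  have h := hx ⟨hxG, hx0⟩
  simp only [sub_zero, nonpos_iff_eq_zero, nnnorm_eq_zero] at h
  ext v
  have := congrArg (fun T : E →L[ℝ] E => T v) h
  simpa [hb] using this

lemma measurable_indicator_of_continuousOn {A : Set E} (hA : MeasurableSet A) {f : E → ℝ≥0∞}
    (hf : ContinuousOn f A) : Measurable (A.indicator f) := by
  classical
  rw [← piecewise_eq_indicator]
  exact hf.measurable_piecewise continuousOn_const hA

/-- Fatou helper -/
lemma lintegral_le_of_ae_tendsto {ν : Measure E} {g : ℕ → E → ℝ≥0∞} {f : E → ℝ≥0∞} {B : ℝ≥0∞}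
    (hm : ∀ k, AEMeasurable (g k) ν)
    (hlim : ∀ᵐ x ∂ν, Tendsto (fun k => g k x) atTop (𝓝 (f x)))
    (hB : ∀ k, ∫⁻ x, g k x ∂ν ≤ B) : ∫⁻ x, f x ∂ν ≤ B := by
  calc ∫⁻ x, f x ∂ν = ∫⁻ x, liminf (fun k => g k x) atTop ∂ν := by
        apply lintegral_congr_ae
        filter_upwards [hlim] with x hx using hx.liminf_eq.symm
    _ ≤ liminf (fun k => ∫⁻ x, g k x ∂ν) atTop := lintegral_liminf_le' hm
    _ ≤ B := liminf_le_of_frequently_le' (Frequently.of_forall hB)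

/-- squared `L²` norm -/
def I2 (A : Set E) (g : E → ℝ) : ℝ≥0∞ := ∫⁻ x in A, ENNReal.ofReal (g x ^ 2) ∂μ

lemma I2_mono {A B : Set E} (h : A ⊆ B) (g : E → ℝ) : I2 μ A g ≤ I2 μ B g :=
  lintegral_mono_set h

lemma I2_congr {A : Set E} (hA : MeasurableSet A) {g f : E → ℝ} (h : EqOn g f A) :
    I2 μ A g = I2 μ A f :=
  setLIntegral_congr_fun hA fun x hx => by simp only [h hx]

lemma I2_dq_le {A A' : Set E} (hA : IsOpen A) (hA' : IsOpen A') {g : E → ℝ}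
    (hg : ContDiffOn ℝ ∞ g A') (b : E) {h : ℝ} (hh : h ≠ 0)
    (hAA : ∀ x ∈ A, ∀ s ∈ Icc (0 : ℝ) 1, x + (s * h) • b ∈ A') :
    I2 μ A (dq h b g) ≤ I2 μ A' (fun x => fderiv ℝ g x b) := by
  set F : E → ℝ≥0∞ := A'.indicator (fun x => ENNReal.ofReal ((fderiv ℝ g x b) ^ 2)) with hF
  have hcont : ContinuousOn (fun x => fderiv ℝ g x b) A' :=
    (dl_contDiffOn hA' hg [b]).continuousOn
  have hFm : Measurable F := by
    have hc : ContinuousOn (fun x => ENNReal.ofReal ((fderiv ℝ g x b) ^ 2)) A' :=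
      ENNReal.continuous_ofReal.comp_continuousOn (hcont.pow 2)
    exact measurable_indicator_of_continuousOn hA'.measurableSet hc
  have hpt : ∀ x ∈ A, ENNReal.ofReal (dq h b g x ^ 2) ≤
      ∫⁻ s in Icc (0 : ℝ) 1, F (x + (s * h) • b) := by
    intro x hx
    set f' : ℝ → ℝ := fun s => fderiv ℝ g (x + (s * h) • b) b with hf'
    have hf'c : ContinuousOn f' (Icc 0 1) :=
      hcont.comp (by fun_prop) (fun s hs => hAA x hx s hs)
    have hder : ∀ s ∈ Icc (0 : ℝ) 1,
        HasDerivAt (fun s => g (x + (s * h) • b)) (h * f' s) s := by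
      intro s hs
      have hd : HasFDerivAt g (fderiv ℝ g (x + (s * h) • b)) (x + (s * h) • b) :=
        ((hg.contDiffAt (hA'.mem_nhds (hAA x hx s hs))).differentiableAt (by simp)).hasFDerivAt
      have hl : HasDerivAt (fun s : ℝ => x + (s * h) • b) (h • b) s := by
        have := (((hasDerivAt_id s).mul_const h).smul_const b).const_add x
        simpa using this
      have := hd.comp_hasDerivAt s hl
      have h4 : h * f' s = fderiv ℝ g (x + (s * h) • b) (h • b) := by simp [hf']
      rw [h4]; exact this
    have hInt : IntervalIntegrable (fun s => h * f' s) volume 0 1 := by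
      apply ContinuousOn.intervalIntegrable
      rw [uIcc_of_le zero_le_one]
      exact continuousOn_const.mul hf'c
    have hftc := intervalIntegral.integral_eq_sub_of_hasDerivAt
      (fun s hs => hder s (by rwa [uIcc_of_le zero_le_one] at hs)) hInt
    rw [intervalIntegral.integral_const_mul] at hftc
    have heq : dq h b g x = ∫ s in (0 : ℝ)..1, f' s := by
      unfold dq
      have h3 : g (x + h • b) - g x = h * ∫ s in (0 : ℝ)..1, f' s := by
        rw [hftc]; simp
      rw [h3, ← mul_assoc, inv_mul_cancel₀ hh, one_mul]
    have hsq : dq h b g x ^ 2 ≤ ∫ s in (0 : ℝ)..1, f' s ^ 2 := by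
      have hi1 : IntervalIntegrable f' volume 0 1 :=
        ContinuousOn.intervalIntegrable (by rwa [uIcc_of_le zero_le_one])
      have hi2 : IntervalIntegrable (fun s => f' s ^ 2) volume 0 1 :=
        ContinuousOn.intervalIntegrable (by rw [uIcc_of_le zero_le_one]; exact hf'c.pow 2)
      set m := dq h b g x with hm
      have h0 : 0 ≤ ∫ s in (0 : ℝ)..1, (f' s - m) ^ 2 :=
        intervalIntegral.integral_nonneg zero_le_one fun s _ => sq_nonneg _
      have h1 : ∫ s in (0 : ℝ)..1, (f' s - m) ^ 2 =
          (∫ s in (0 : ℝ)..1, f' s ^ 2) - m ^ 2 := by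
        have : ∀ s, (f' s - m) ^ 2 = (f' s ^ 2 - (2 * m) * f' s) + m ^ 2 := fun s => by ring
        simp_rw [this]
        rw [intervalIntegral.integral_add (hi2.sub (hi1.const_mul _)) (by simp),
          intervalIntegral.integral_sub hi2 (hi1.const_mul _),
          intervalIntegral.integral_const_mul, ← heq]
        simp; ring
      linarith
    calc ENNReal.ofReal (dq h b g x ^ 2) ≤ ENNReal.ofReal (∫ s in (0 : ℝ)..1, f' s ^ 2) :=
          ENNReal.ofReal_le_ofReal hsq
      _ = ENNReal.ofReal (∫ s in Icc (0 : ℝ) 1, f' s ^ 2) := by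
          rw [intervalIntegral.integral_of_le zero_le_one, integral_Icc_eq_integral_Ioc]
      _ = ∫⁻ s in Icc (0 : ℝ) 1, ENNReal.ofReal (f' s ^ 2) := by
          apply ofReal_integral_eq_lintegral_ofReal
          · exact (hf'c.pow 2).integrableOn_Icc
          · exact Eventually.of_forall fun s => sq_nonneg _
      _ = ∫⁻ s in Icc (0 : ℝ) 1, F (x + (s * h) • b) := by
          apply setLIntegral_congr_fun measurableSet_Icc
          intro s hs
          simp only [hF, indicator_of_mem (hAA x hx s hs), hf']
  calc I2 μ A (dq h b g) ≤ ∫⁻ x in A, (∫⁻ s in Icc (0 : ℝ) 1, F (x + (s * h) • b)) ∂μ :=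
        setLIntegral_mono' hA.measurableSet hpt
    _ ≤ ∫⁻ x, (∫⁻ s in Icc (0 : ℝ) 1, F (x + (s * h) • b)) ∂μ := setLIntegral_le_lintegral _ _
    _ = ∫⁻ s in Icc (0 : ℝ) 1, (∫⁻ x, F (x + (s * h) • b) ∂μ) := by
        apply lintegral_lintegral_swap
        have hc : Continuous fun p : E × ℝ => p.1 + (p.2 * h) • b := by fun_prop
        exact (hFm.comp hc.measurable).aemeasurable
    _ = ∫⁻ s in Icc (0 : ℝ) 1, (∫⁻ x, F x ∂μ) := by
        congr 1; ext s
        exact lintegral_add_right_eq_self F _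
    _ = I2 μ A' (fun x => fderiv ℝ g x b) := by
        rw [setLIntegral_const]
        simp [hF, lintegral_indicator hA'.measurableSet, I2]

end meas

/-- cutoff functions -/
lemma exists_cutoff (E : Type*) [NormedAddCommGroup E] [NormedSpace ℝ E] [FiniteDimensional ℝ E]
    {ρ ρ' : ℝ} (hρ : 0 < ρ) (hρ' : ρ < ρ') :
    ∃ K : ℝ, 0 ≤ K ∧ ∀ (y : E) (R : ℝ), 0 < R → ∃ χ : E → ℝ, ContDiff ℝ ∞ χ ∧
      HasCompactSupport χ ∧ tsupport χ ⊆ ball y (ρ' * R) ∧ (∀ x, 0 ≤ χ x) ∧ (∀ x, χ x ≤ 1) ∧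
      (∀ x ∈ ball y (ρ * R), χ x = 1) ∧ ∀ x b, ‖b‖ ≤ R → |fderiv ℝ χ x b| ≤ K := by
  obtain ⟨ρ1, h1, h2⟩ := exists_between hρ'
  let B : ContDiffBump (0 : E) := ⟨ρ, ρ1, hρ, h1⟩
  have hBs : ContDiff ℝ ∞ B := B.contDiff
  have hBc : HasCompactSupport B := B.hasCompactSupport
  obtain ⟨K, hK⟩ := (hBc.fderiv ℝ).exists_bound_of_continuous (hBs.continuous_fderiv (by simp))
  refine ⟨K, (norm_nonneg _).trans (hK 0), fun y R hR => ?_⟩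
  have hRi : 0 < R⁻¹ := inv_pos.2 hR
  set T : E → E := fun x => R⁻¹ • (x - y) with hT
  have hTs : ContDiff ℝ ∞ T := (contDiff_id.sub contDiff_const).const_smul _
  have hnorm : ∀ x, ‖T x‖ = ‖x - y‖ / R := fun x => by
    simp [hT, norm_smul, abs_of_pos hR]; field_simp
  have hsupp : tsupport (fun x => B (T x)) ⊆ closedBall y (ρ1 * R) := by
    apply closure_minimal _ isClosed_closedBall
    intro x hx
    have : T x ∈ Function.support B := hx
    rw [B.support_eq, mem_ball_zero_iff, hnorm, div_lt_iff₀ hR] at this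
    rw [mem_closedBall, dist_eq_norm]; exact this.le
  refine ⟨fun x => B (T x), hBs.comp hTs, ?_, ?_, fun x => B.nonneg, fun x => B.le_one, ?_, ?_⟩
  · exact HasCompactSupport.of_support_subset_isCompact (isCompact_closedBall y (ρ1 * R))
      ((subset_tsupport _).trans hsupp)
  · exact hsupp.trans (closedBall_subset_ball (by gcongr))
  · intro x hx
    apply B.one_of_mem_closedBall
    rw [mem_closedBall_zero_iff, hnorm, div_le_iff₀ hR]
    rw [mem_ball, dist_eq_norm] at hx; exact hx.le
  · intro x b hb
    have hd : HasFDerivAt (fun x => B (T x)) ((fderiv ℝ B (T x)).comp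
        (R⁻¹ • ContinuousLinearMap.id ℝ E)) x := by
      have h3 : HasFDerivAt T (R⁻¹ • ContinuousLinearMap.id ℝ E) x :=
        ((hasFDerivAt_id x).sub_const y).const_smul R⁻¹
      exact (hBs.differentiable (by simp) (T x)).hasFDerivAt.comp x h3
    rw [hd.fderiv]
    simp only [ContinuousLinearMap.comp_apply, smul_apply,
      ContinuousLinearMap.id_apply]
    rw [← Real.norm_eq_abs]
    calc _ ≤ ‖fderiv ℝ B (T x)‖ * ‖R⁻¹ • b‖ := ContinuousLinearMap.le_opNorm _ _
      _ ≤ K * 1 := by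
        gcongr
        · exact (norm_nonneg _).trans (hK 0)
        · exact hK _
        · rw [norm_smul, norm_inv, Real.norm_of_nonneg hR.le, inv_mul_le_iff₀ hR]; simpa using hb
      _ = K := mul_one K

end KR

/-! ### Part C: Caccioppoli inequality -/
namespace KR
open Filter Topology
open scoped ContDiff

/-- functions continuous on `B`, vanishing off `V`, smooth in `V ∩ B`. -/
structure IsW {E : Type*} [NormedAddCommGroup E] [NormedSpace ℝ E] (V B : Set E) (w : E → ℝ) :
    Prop where
  cont : ContinuousOn w B
  zero : ∀ x ∈ B, x ∉ V → w x = 0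
  smooth : ContDiffOn ℝ ∞ w (V ∩ B)

section cacc
set_option linter.unusedSectionVars false
variable {E : Type*} [NormedAddCommGroup E] [NormedSpace ℝ E] [FiniteDimensional ℝ E]
  [MeasurableSpace E] [BorelSpace E] (μ : Measure E) [μ.IsAddHaarMeasure]

lemma contDiff_of_zero_off {G K : Set E} (hG : IsOpen G) (hK : IsCompact K) (hKG : K ⊆ G)
    {g : E → ℝ} (hg : ContDiffOn ℝ ∞ g G) (h0 : ∀ x, x ∉ K → g x = 0) :
    ContDiff ℝ ∞ g := by
  rw [contDiff_iff_contDiffAt]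
  intro x
  by_cases hx : x ∈ G
  · exact hg.contDiffAt (hG.mem_nhds hx)
  · have : g =ᶠ[𝓝 x] fun _ => 0 := by
      filter_upwards [hK.isClosed.isOpen_compl.mem_nhds (fun h => hx (hKG h))] with z hz
      exact h0 z hz
    exact contDiffAt_const.congr_of_eventuallyEq this

lemma integrable_of_zero_off {G K : Set E} (hG : IsOpen G) (hK : IsCompact K) (hKG : K ⊆ G)
    {g : E → ℝ} (hg : ContinuousOn g G) (h0 : ∀ x, x ∉ K → g x = 0) :
    Integrable g μ := by
  have : Continuous g := by
    rw [continuous_iff_continuousAt]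
    intro x
    by_cases hx : x ∈ G
    · exact hg.continuousAt (hG.mem_nhds hx)
    · have : g =ᶠ[𝓝 x] fun _ => 0 := by
        filter_upwards [hK.isClosed.isOpen_compl.mem_nhds (fun h => hx (hKG h))] with z hz
        exact h0 z hz
      exact continuousAt_const.congr this.symm
  exact this.integrable_of_hasCompactSupport (HasCompactSupport.intro hK h0)

/-- The truncated energy estimate. -/
lemma cacc_trunc {ι : Type*} [Fintype ι] (b : ι → E) {V B : Set E} (hV : IsOpen V) (hB : IsOpen B)
    {w : E → ℝ} (hw : IsW V B w) {χ : E → ℝ} (hχ : ContDiff ℝ ∞ χ) (hχc : HasCompactSupport χ)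
    (hχB : tsupport χ ⊆ B) (hχ0 : ∀ x, 0 ≤ χ x) (hχ1 : ∀ x, χ x ≤ 1) {K : ℝ}
    (hK : ∀ x i, |fderiv ℝ χ x (b i)| ≤ K) {M : ℝ}
    (hwi : IntegrableOn (fun x => w x ^ 2) (V ∩ B) μ)
    (hyp : ∀ ψ : E → ℝ, ContDiff ℝ ∞ ψ → HasCompactSupport ψ → tsupport ψ ⊆ V ∩ B →
      |∫ x, ψ x * Lop b w x ∂μ| ≤ 2 * M + 1 / 8 * (∑ i, ∫ x, (fderiv ℝ ψ x (b i)) ^ 2 ∂μ)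
        + 1 / 2 * ∫ x, ψ x ^ 2 ∂μ)
    {φ : ℝ → ℝ} {ε : ℝ} (hε : 0 < ε) (hφ : ContDiff ℝ ∞ φ) (hφ0 : ∀ t, |t| < ε → φ t = 0)
    (hφp : ∀ t, 0 ≤ deriv φ t) (hφ1 : ∀ t, deriv φ t ≤ 1)
    (hφ2 : ∀ t, φ t ^ 2 ≤ t ^ 2 * deriv φ t) :
    ∫⁻ x in V ∩ B, ENNReal.ofReal
      (χ x ^ 2 * deriv φ (w x) * ∑ i, (fderiv ℝ w x (b i)) ^ 2) ∂μ ≤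
      ENNReal.ofReal (4 * (3 * (Fintype.card ι * K ^ 2) + 1) * (∫ x in V ∩ B, w x ^ 2 ∂μ)
        + 8 * M) := by
  have hG : IsOpen (V ∩ B) := hV.inter hB
  set G := V ∩ B with hGdef
  set Kε : Set E := {x | x ∈ tsupport χ ∧ ε ≤ |w x|} with hKε
  have hKc : IsCompact Kε := by
    have hcl : IsClosed Kε := by
      have hc : ContinuousOn (fun x => |w x|) (tsupport χ) := (hw.cont.mono hχB).abs
      have := hc.preimage_isClosed_of_isClosed (isClosed_tsupport χ) (isClosed_Ici (a := ε))
      exact this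
    exact hχc.isCompact.of_isClosed_subset hcl fun x hx => hx.1
  have hKG : Kε ⊆ G := by
    intro x hx
    refine ⟨?_, hχB hx.1⟩
    by_contra hxV
    have h1 : ε ≤ |w x| := hx.2
    rw [hw.zero x (hχB hx.1) hxV, abs_zero] at h1
    linarith
  have hws : ContDiffOn ℝ ∞ w G := hw.smooth
  have hdw : ∀ x ∈ G, DifferentiableAt ℝ w x := fun x hx =>
    (hws.contDiffAt (hG.mem_nhds hx)).differentiableAt (by simp)
  -- off Kε
  have hoff : ∀ x, x ∉ Kε → χ x = 0 ∨ |w x| < ε := by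
    intro x hx
    by_cases h : x ∈ tsupport χ
    · right
      by_contra h2
      exact hx ⟨h, not_lt.1 h2⟩
    · left; exact image_eq_zero_of_notMem_tsupport h
  have hφ'0 : ∀ t, |t| < ε → deriv φ t = 0 := by
    intro t ht
    have : φ =ᶠ[𝓝 t] fun _ => 0 := by
      filter_upwards [(isOpen_lt continuous_abs continuous_const).mem_nhds ht] with s hs
      exact hφ0 s hs
    rw [this.deriv_eq]; simp
  set ψ : E → ℝ := fun x => χ x ^ 2 * φ (w x) with hψ
  have hψ0 : ∀ x, x ∉ Kε → ψ x = 0 := by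
    intro x hx
    rcases hoff x hx with h | h
    · simp [hψ, h]
    · simp [hψ, hφ0 _ h]
  have hψsG : ContDiffOn ℝ ∞ ψ G := (hχ.contDiffOn.pow 2).mul (hφ.comp_contDiffOn hws)
  have hψs : ContDiff ℝ ∞ ψ := contDiff_of_zero_off hG hKc hKG hψsG hψ0
  have hψc : HasCompactSupport ψ := HasCompactSupport.intro hKc hψ0
  have hψK : tsupport ψ ⊆ Kε := closure_minimal (fun x hx => by
    by_contra h; exact hx (hψ0 x h)) hKc.isClosed
  have hψG : tsupport ψ ⊆ G := hψK.trans hKG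
  have hdψ0 : ∀ x, x ∉ Kε → fderiv ℝ ψ x = 0 := by
    intro x hx
    have : ψ =ᶠ[𝓝 x] fun _ => 0 := by
      filter_upwards [hKc.isClosed.isOpen_compl.mem_nhds hx] with z hz using hψ0 z hz
    rw [this.fderiv_eq]; simp
  -- derivative of ψ
  have hdψ : ∀ x ∈ G, ∀ v, fderiv ℝ ψ x v =
      2 * χ x * fderiv ℝ χ x v * φ (w x) + χ x ^ 2 * (deriv φ (w x) * fderiv ℝ w x v) := by
    intro x hx v
    have h1 : HasFDerivAt χ (fderiv ℝ χ x) x := (hχ.differentiable (by simp) x).hasFDerivAt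
    have h2 : HasFDerivAt w (fderiv ℝ w x) x := (hdw x hx).hasFDerivAt
    have h3 : HasFDerivAt (fun x => φ (w x)) (deriv φ (w x) • fderiv ℝ w x) x :=
      ((hφ.differentiable (by simp) (w x)).hasDerivAt).comp_hasFDerivAt x h2
    have h4 := (h1.pow 2).mul h3
    have h5 : fderiv ℝ ψ x = _ := h4.fderiv
    rw [h5]
    simp
    ring
  set Di : ι → E → ℝ := fun i x => fderiv ℝ w x (b i) with hDi
  have hDis : ∀ i, ContDiffOn ℝ ∞ (Di i) G := fun i => dl_contDiffOn hG hws [b i]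
  have hDic : ∀ i, ContinuousOn (Di i) G := fun i => (hDis i).continuousOn
  have hψcont : Continuous ψ := hψs.continuous
  have hDψc : ∀ i, Continuous fun x => fderiv ℝ ψ x (b i) := fun i =>
    (hψs.continuous_fderiv (by simp)).clm_apply continuous_const
  have hcI : ∀ g : E → ℝ, ContinuousOn g G → (∀ x, x ∉ Kε → g x = 0) → Integrable g μ :=
    fun g h1 h2 => integrable_of_zero_off μ hG hKc hKG h1 h2
  -- integration by parts
  have hibp : ∀ i, ∫ x, ψ x * fderiv ℝ (Di i) x (b i) ∂μ =
      -∫ x, fderiv ℝ ψ x (b i) * Di i x ∂μ := by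
    intro i
    apply integral_mul_fderiv_eq_neg_fderiv_mul_of_integrable
    · exact hcI _ ((hDψc i).continuousOn.mul (hDic i)) fun x hx => by simp [hdψ0 x hx]
    · exact hcI _ (hψcont.continuousOn.mul (dl_contDiffOn hG (hDis i) [b i]).continuousOn)
        fun x hx => by simp [hψ0 x hx]
    · exact hcI _ (hψcont.continuousOn.mul (hDic i)) fun x hx => by simp [hψ0 x hx]
    · exact fun x _ => hψs.differentiable (by simp) x
    · exact fun x hx => ((hDis i).contDiffAt (hG.mem_nhds (hψG hx))).differentiableAt (by simp)
  have hL : ∫ x, ψ x * Lop b w x ∂μ = -∫ x, ∑ i, fderiv ℝ ψ x (b i) * Di i x ∂μ := by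
    have : ∀ x, ψ x * Lop b w x = ∑ i, ψ x * fderiv ℝ (Di i) x (b i) := by
      intro x; simp only [Lop, Finset.mul_sum]; rfl
    simp_rw [this]
    rw [integral_finsetSum, integral_finsetSum, ← Finset.sum_neg_distrib]
    · exact Finset.sum_congr rfl fun i _ => hibp i
    · intro i _
      exact hcI _ ((hDψc i).continuousOn.mul (hDic i)) fun x hx => by simp [hdψ0 x hx]
    · intro i _
      exact hcI _ (hψcont.continuousOn.mul (dl_contDiffOn hG (hDis i) [b i]).continuousOn)
        fun x hx => by simp [hψ0 x hx]
  -- main quantities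
  set j : E → ℝ := fun x => χ x ^ 2 * deriv φ (w x) * ∑ i, (Di i x) ^ 2 with hj
  set q : E → ℝ := G.indicator (fun x => w x ^ 2) with hq
  set N : ℝ := Fintype.card ι * K ^ 2 with hN
  have hqi : Integrable q μ := (integrable_indicator_iff hG.measurableSet).2 hwi
  have hqQ : ∫ x, q x ∂μ = ∫ x in G, w x ^ 2 ∂μ := integral_indicator hG.measurableSet
  have hq0 : ∀ x, 0 ≤ q x := fun x => indicator_nonneg (fun _ _ => sq_nonneg _) x
  have hN0 : 0 ≤ N := by positivity
  have hj0 : ∀ x, 0 ≤ j x := fun x =>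
    mul_nonneg (mul_nonneg (sq_nonneg _) (hφp _)) (Finset.sum_nonneg fun i _ => sq_nonneg _)
  have hjoff : ∀ x, x ∉ Kε → j x = 0 := by
    intro x hx
    rcases hoff x hx with h | h
    · simp [hj, h]
    · simp [hj, hφ'0 _ h]
  have hφdc : Continuous (deriv φ) := hφ.continuous_deriv (by simp)
  have hjc : ContinuousOn j G := by
    apply ContinuousOn.mul
    · exact (hχ.continuous.continuousOn.pow 2).mul (hφdc.comp_continuousOn hws.continuousOn)
    · exact continuousOn_finsetSum _ fun i _ => (hDic i).pow 2
  have hji : Integrable j μ := hcI j hjc hjoff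
  -- pointwise bounds
  have hp : ∀ x, (1 / 2) * j x - 2 * N * q x ≤ ∑ i, fderiv ℝ ψ x (b i) * Di i x := by
    intro x
    by_cases hx : x ∈ Kε
    swap
    · have : ∑ i, fderiv ℝ ψ x (b i) * Di i x = 0 :=
        Finset.sum_eq_zero fun i _ => by simp [hdψ0 x hx]
      rw [this, hjoff x hx]
      have := mul_nonneg hN0 (hq0 x)
      linarith
    · have hxG := hKG hx
      have hqx : q x = w x ^ 2 := indicator_of_mem hxG _
      have hi : ∀ i, (1 / 2) * (χ x ^ 2 * deriv φ (w x) * (Di i x) ^ 2) - 2 * K ^ 2 * w x ^ 2 ≤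
          fderiv ℝ ψ x (b i) * Di i x := by
        intro i
        rw [hdψ x hxG]
        change _ ≤ (2 * χ x * fderiv ℝ χ x (b i) * φ (w x) +
          χ x ^ 2 * (deriv φ (w x) * Di i x)) * Di i x
        set d := Di i x
        set p := deriv φ (w x)
        set c := fderiv ℝ χ x (b i)
        have hp0 : 0 ≤ p := hφp _
        have hc2 : c ^ 2 ≤ K ^ 2 := by
          rw [← sq_abs c]; have := hK x i; gcongr
        have hph := hφ2 (w x)
        -- with s = sqrt p
        have hsq : √p ^ 2 = p := Real.sq_sqrt hp0
        have hab : |φ (w x)| ≤ |w x| * √p := by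
          apply abs_le_of_sq_le_sq' _ (by positivity) |> abs_le.2
          rw [mul_pow, hsq, sq_abs]; exact hph
        have h1 : |2 * χ x * c * φ (w x) * d| ≤ 2 * (χ x * √p * |d|) * (|c| * |w x|) := by
          rw [abs_mul, abs_mul, abs_mul, abs_mul, abs_of_nonneg (hχ0 x), abs_two]
          calc 2 * χ x * |c| * |φ (w x)| * |d| ≤ 2 * χ x * |c| * (|w x| * √p) * |d| := by
                have := hχ0 x
                gcongr
            _ = _ := by ring
        have h2 : 2 * (χ x * √p * |d|) * (|c| * |w x|) ≤
            1 / 2 * (χ x * √p * |d|) ^ 2 + 2 * (|c| * |w x|) ^ 2 := by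
          nlinarith [sq_nonneg (χ x * √p * |d| - 2 * (|c| * |w x|))]
        have h3 : (χ x * √p * |d|) ^ 2 = χ x ^ 2 * p * d ^ 2 := by
          rw [mul_pow, mul_pow, hsq, sq_abs]
        have h4 : (|c| * |w x|) ^ 2 ≤ K ^ 2 * w x ^ 2 := by
          rw [mul_pow, sq_abs, sq_abs]; gcongr
        have h5 := neg_abs_le (2 * χ x * c * φ (w x) * d)
        nlinarith
      calc (1 / 2) * j x - 2 * N * q x
          = ∑ i, ((1 / 2) * (χ x ^ 2 * deriv φ (w x) * (Di i x) ^ 2) - 2 * K ^ 2 * w x ^ 2) := by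
            rw [Finset.sum_sub_distrib, ← Finset.mul_sum, ← Finset.mul_sum, hqx]
            simp [hj, hN]; ring
        _ ≤ _ := Finset.sum_le_sum fun i _ => hi i
  have hp2 : ∀ x, ∑ i, (fderiv ℝ ψ x (b i)) ^ 2 ≤ 2 * j x + 8 * N * q x := by
    intro x
    by_cases hx : x ∈ Kε
    swap
    · have : ∑ i, (fderiv ℝ ψ x (b i)) ^ 2 = 0 :=
        Finset.sum_eq_zero fun i _ => by simp [hdψ0 x hx]
      rw [this, hjoff x hx]
      have := mul_nonneg hN0 (hq0 x)
      linarith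
    · have hxG := hKG hx
      have hqx : q x = w x ^ 2 := indicator_of_mem hxG _
      have hi : ∀ i, (fderiv ℝ ψ x (b i)) ^ 2 ≤
          2 * (χ x ^ 2 * deriv φ (w x) * (Di i x) ^ 2) + 8 * K ^ 2 * w x ^ 2 := by
        intro i
        rw [hdψ x hxG]
        change (2 * χ x * fderiv ℝ χ x (b i) * φ (w x) +
          χ x ^ 2 * (deriv φ (w x) * Di i x)) ^ 2 ≤ _
        set d := Di i x
        set p := deriv φ (w x)
        set c := fderiv ℝ χ x (b i)
        have hp0 : 0 ≤ p := hφp _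
        have hp1 : p ≤ 1 := hφ1 _
        have hc2 : c ^ 2 ≤ K ^ 2 := by
          rw [← sq_abs c]; have := hK x i; gcongr
        have hx2 : χ x ^ 2 ≤ 1 := pow_le_one₀ (hχ0 x) (hχ1 x)
        have hph : φ (w x) ^ 2 ≤ w x ^ 2 := (hφ2 (w x)).trans
          (mul_le_of_le_one_right (sq_nonneg _) hp1)
        have h1 : (2 * χ x * c * φ (w x) + χ x ^ 2 * (p * d)) ^ 2 ≤
            8 * (χ x ^ 2 * (c ^ 2 * φ (w x) ^ 2)) + 2 * ((χ x ^ 2 * p * d ^ 2) * (χ x ^ 2 * p)) := by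
          nlinarith [sq_nonneg (2 * χ x * c * φ (w x) - χ x ^ 2 * (p * d))]
        have h2 : χ x ^ 2 * (c ^ 2 * φ (w x) ^ 2) ≤ 1 * (K ^ 2 * w x ^ 2) := by gcongr
        have h3 : (χ x ^ 2 * p * d ^ 2) * (χ x ^ 2 * p) ≤ (χ x ^ 2 * p * d ^ 2) * (1 * 1) := by
          gcongr
        linarith
      calc ∑ i, (fderiv ℝ ψ x (b i)) ^ 2 ≤
          ∑ i, (2 * (χ x ^ 2 * deriv φ (w x) * (Di i x) ^ 2) + 8 * K ^ 2 * w x ^ 2) :=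
            Finset.sum_le_sum fun i _ => hi i
        _ = 2 * j x + 8 * N * q x := by
            rw [Finset.sum_add_distrib, ← Finset.mul_sum, ← Finset.mul_sum, hqx]
            simp [hj, hN]; ring
  have hp3 : ∀ x, ψ x ^ 2 ≤ q x := by
    intro x
    by_cases hx : x ∈ Kε
    swap
    · rw [hψ0 x hx]; simpa using hq0 x
    · have hqx : q x = w x ^ 2 := indicator_of_mem (hKG hx) _
      have hph : φ (w x) ^ 2 ≤ w x ^ 2 := (hφ2 (w x)).trans
          (mul_le_of_le_one_right (sq_nonneg _) (hφ1 _))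
      have hx2 : (χ x ^ 2) ^ 2 ≤ 1 := pow_le_one₀ (sq_nonneg _) (pow_le_one₀ (hχ0 x) (hχ1 x))
      calc ψ x ^ 2 = (χ x ^ 2) ^ 2 * φ (w x) ^ 2 := by simp [hψ]; ring
        _ ≤ 1 * w x ^ 2 := by gcongr
        _ = q x := by rw [hqx, one_mul]
  set J := ∫ x, j x ∂μ with hJ
  set Q := ∫ x in G, w x ^ 2 ∂μ with hQ
  have hDψi : ∀ i, Integrable (fun x => (fderiv ℝ ψ x (b i)) ^ 2) μ := fun i =>
    hcI _ ((hDψc i).pow 2).continuousOn fun x hx => by simp [hdψ0 x hx]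
  have e1 : 1 / 2 * J - 2 * N * Q ≤ ∫ x, ∑ i, fderiv ℝ ψ x (b i) * Di i x ∂μ := by
    have := integral_mono (μ := μ) ((hji.const_mul (1 / 2)).sub (hqi.const_mul (2 * N)))
      (integrable_finsetSum Finset.univ fun i _ => hcI _ ((hDψc i).continuousOn.mul (hDic i))
        fun x hx => by simp [hdψ0 x hx]) hp
    simp only [Pi.sub_apply] at this
    rw [integral_sub (hji.const_mul (1 / 2)) (hqi.const_mul (2 * N)), integral_const_mul,
      integral_const_mul, hqQ] at this
    exact this
  have e2 : ∑ i, ∫ x, (fderiv ℝ ψ x (b i)) ^ 2 ∂μ ≤ 2 * J + 8 * N * Q := by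
    rw [← integral_finsetSum _ fun i _ => hDψi i]
    have := integral_mono (μ := μ) (integrable_finsetSum Finset.univ fun i _ => hDψi i)
      ((hji.const_mul 2).add (hqi.const_mul (8 * N))) hp2
    simp only [Pi.add_apply] at this
    rw [integral_add (hji.const_mul 2) (hqi.const_mul (8 * N)), integral_const_mul,
      integral_const_mul, hqQ] at this
    exact this
  have e3 : ∫ x, ψ x ^ 2 ∂μ ≤ Q := by
    rw [← hqQ]
    exact integral_mono (hcI _ (hψcont.pow 2).continuousOn fun x hx => by simp [hψ0 x hx]) hqi hp3
  have e4 := hyp ψ hψs hψc hψG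
  rw [hL, abs_neg] at e4
  have e5 := le_abs_self (∫ x, ∑ i, fderiv ℝ ψ x (b i) * Di i x ∂μ)
  have e6 : J ≤ 4 * (3 * N + 1) * Q + 8 * M := by
    have hQ0 : 0 ≤ Q := by rw [← hqQ]; exact integral_nonneg hq0
    nlinarith
  calc ∫⁻ x in G, ENNReal.ofReal (j x) ∂μ ≤ ∫⁻ x, ENNReal.ofReal (j x) ∂μ :=
        setLIntegral_le_lintegral _ _
    _ = ENNReal.ofReal J := (ofReal_integral_eq_lintegral_ofReal hji
        (Eventually.of_forall hj0)).symm
    _ ≤ _ := ENNReal.ofReal_le_ofReal e6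

/-- The energy estimate after removing the truncation. -/
lemma cacc_core {ι : Type*} [Fintype ι] (b : ι → E) {V B A : Set E} (hV : IsOpen V)
    (hB : IsOpen B) (hA : IsOpen A) (hAB : A ⊆ B)
    {w : E → ℝ} (hw : IsW V B w) {χ : E → ℝ} (hχ : ContDiff ℝ ∞ χ) (hχc : HasCompactSupport χ)
    (hχB : tsupport χ ⊆ B) (hχ0 : ∀ x, 0 ≤ χ x) (hχ1 : ∀ x, χ x ≤ 1)
    (hχA : ∀ x ∈ A, χ x = 1) {K : ℝ}
    (hK : ∀ x i, |fderiv ℝ χ x (b i)| ≤ K) {M : ℝ}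
    (hwi : IntegrableOn (fun x => w x ^ 2) (V ∩ B) μ)
    (hyp : ∀ ψ : E → ℝ, ContDiff ℝ ∞ ψ → HasCompactSupport ψ → tsupport ψ ⊆ V ∩ B →
      |∫ x, ψ x * Lop b w x ∂μ| ≤ 2 * M + 1 / 8 * (∑ i, ∫ x, (fderiv ℝ ψ x (b i)) ^ 2 ∂μ)
        + 1 / 2 * ∫ x, ψ x ^ 2 ∂μ) (i : ι) :
    I2 μ (V ∩ A) (fun x => fderiv ℝ w x (b i)) ≤
      ENNReal.ofReal (4 * (3 * (Fintype.card ι * K ^ 2) + 1) * (∫ x in V ∩ B, w x ^ 2 ∂μ)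
        + 8 * M) := by
  have hGA : IsOpen (V ∩ A) := hV.inter hA
  have hε : ∀ k : ℕ, (0 : ℝ) < 1 / (k + 1) := fun k => by positivity
  choose φ h1 h2 h3 h4 h5 h6 using fun k => exists_phi (hε k)
  have hwA : ContDiffOn ℝ ∞ w (V ∩ A) := hw.smooth.mono (inter_subset_inter_right _ hAB)
  refine lintegral_le_of_ae_tendsto (g := fun k x =>
    ENNReal.ofReal (deriv (φ k) (w x) * (fderiv ℝ w x (b i)) ^ 2)) ?_ ?_ ?_
  · intro k
    have hc : ContinuousOn (fun x => ENNReal.ofReal (deriv (φ k) (w x) *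
        (fderiv ℝ w x (b i)) ^ 2)) (V ∩ A) := by
      apply ENNReal.continuous_ofReal.comp_continuousOn
      exact (((h1 k).continuous_deriv (by simp)).comp_continuousOn hwA.continuousOn).mul
        ((dl_contDiffOn hGA hwA [b i]).continuousOn.pow 2)
    exact hc.aemeasurable hGA.measurableSet
  · filter_upwards [ae_zero_level μ hGA hwA] with x hx
    by_cases h0 : w x = 0
    · simp [hx h0]
    · have hpos : 0 < |w x| := abs_pos.2 h0
      have hev : ∀ᶠ k : ℕ in atTop, deriv (φ k) (w x) = 1 := by
        have ht : Tendsto (fun k : ℕ => 2 * (1 / ((k : ℝ) + 1))) atTop (𝓝 (2 * 0)) :=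
          tendsto_one_div_add_atTop_nhds_zero_nat.const_mul 2
        rw [mul_zero] at ht
        filter_upwards [ht.eventually_lt_const hpos] with k hk
        exact h6 k _ hk.le
      apply tendsto_const_nhds.congr'
      filter_upwards [hev] with k hk
      rw [hk, one_mul]
  · intro k
    refine le_trans ?_ (cacc_trunc μ b hV hB hw hχ hχc hχB hχ0 hχ1 hK hwi hyp (hε k) (h1 k) (h2 k)
      (h3 k) (h4 k) (h5 k))
    refine le_trans ?_ (lintegral_mono_set (inter_subset_inter_right V hAB))
    apply setLIntegral_mono' hGA.measurableSet
    intro x hx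
    apply ENNReal.ofReal_le_ofReal
    rw [hχA x hx.2, one_pow, one_mul]
    have h7 := h3 k (w x)
    gcongr
    exact Finset.single_le_sum (f := fun i => (fderiv ℝ w x (b i)) ^ 2)
      (fun i _ => sq_nonneg _) (Finset.mem_univ i)

end cacc
end KR

/-! ### Part D: local higher regularity -/
namespace KR
open Filter Topology
open scoped ContDiff NNReal

/-- Local flatness data. -/
structure Loc {E : Type*} [NormedAddCommGroup E] [NormedSpace ℝ E] {ι : Type*}
    (i0 : ι) (V : Set E) (y : E) (R : ℝ) (b : ι → E) : Prop where
  hV : IsOpen V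
  hR : 0 < R
  hb : ∀ i, ‖b i‖ ≤ R
  inv : ∀ i, i ≠ i0 → ∀ x ∈ ball y R, ∀ t : ℝ, x + t • b i ∈ ball y R → x ∈ V →
    x + t • b i ∈ V

section loc
set_option linter.unusedSectionVars false
variable {E : Type*} [NormedAddCommGroup E] [NormedSpace ℝ E] [FiniteDimensional ℝ E]
  [MeasurableSpace E] [BorelSpace E] (μ : Measure E) [μ.IsAddHaarMeasure]
  {ι : Type*} [Fintype ι] {i0 : ι} {V : Set E} {y : E} {R : ℝ} {b : ι → E}

lemma Loc.ball_shift (h : Loc i0 V y R b) {ρ ρ' : ℝ} (i : ι) {x : E}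
    (hx : x ∈ ball y (ρ * R)) {t : ℝ} (ht : |t| ≤ ρ' - ρ) : x + t • b i ∈ ball y (ρ' * R) := by
  rw [mem_ball, dist_eq_norm] at hx ⊢
  have h1 : ‖t • b i‖ ≤ (ρ' - ρ) * R := by
    rw [norm_smul, Real.norm_eq_abs]
    have h2 := h.hb i
    have h3 := h.hR
    have h4 : 0 ≤ ρ' - ρ := (abs_nonneg t).trans ht
    gcongr
  calc ‖x + t • b i - y‖ = ‖(x - y) + t • b i‖ := by congr 1; abel
    _ ≤ ‖x - y‖ + ‖t • b i‖ := norm_add_le _ _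
    _ < ρ' * R := by linarith

lemma Loc.ball_sub (h : Loc i0 V y R b) {ρ ρ' : ℝ} (hρ : ρ ≤ ρ') :
    ball y (ρ * R) ⊆ ball y (ρ' * R) :=
  ball_subset_ball (by have := h.hR; gcongr)

lemma Loc.ball_sub_one (h : Loc i0 V y R b) {ρ : ℝ} (hρ : ρ ≤ 1) :
    ball y (ρ * R) ⊆ ball y R := by
  have := h.ball_sub hρ
  rwa [one_mul] at this

lemma Loc.shift (h : Loc i0 V y R b) {ρ ρ' : ℝ} (h1 : ρ' ≤ 1) {i : ι} (hi : i ≠ i0) {x : E}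
    (hx : x ∈ V ∩ ball y (ρ * R)) {t : ℝ} (ht : |t| ≤ ρ' - ρ) :
    x + t • b i ∈ V ∩ ball y (ρ' * R) := by
  have h2 := h.ball_shift i hx.2 ht
  have h4 : 0 ≤ ρ' - ρ := (abs_nonneg t).trans ht
  exact ⟨h.inv i hi x (h.ball_sub_one (by linarith) hx.2) t (h.ball_sub_one h1 h2) hx.1, h2⟩

lemma Loc.isOpen (h : Loc i0 V y R b) (ρ : ℝ) : IsOpen (V ∩ ball y (ρ * R)) :=
  h.hV.inter isOpen_ball

lemma Loc.mono (h : Loc i0 V y R b) {ρ ρ' : ℝ} (hρ : ρ ≤ ρ') :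
    V ∩ ball y (ρ * R) ⊆ V ∩ ball y (ρ' * R) :=
  inter_subset_inter_right _ (h.ball_sub hρ)

lemma Loc.isW_dq (h : Loc i0 V y R b) {ρ ρ' : ℝ} (h1 : ρ' ≤ 1) {i : ι} (hi : i ≠ i0)
    {u : E → ℝ} (hu : IsW V (ball y (ρ' * R)) u) {t : ℝ} (ht : |t| ≤ ρ' - ρ) :
    IsW V (ball y (ρ * R)) (dq t (b i) u) := by
  have h4 : ρ ≤ ρ' := by have := (abs_nonneg t).trans ht; linarith
  refine ⟨?_, ?_, ?_⟩
  · have hc : ContinuousOn (fun x => u (x + t • b i)) (ball y (ρ * R)) :=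
      hu.cont.comp (by fun_prop) fun x hx => h.ball_shift i hx ht
    exact continuousOn_const.mul (hc.sub (hu.cont.mono (h.ball_sub h4)))
  · intro x hx hxV
    have h5 := h.ball_shift i hx ht
    have h6 : x + t • b i ∉ V := by
      intro h7
      have := h.inv i hi _ (h.ball_sub_one h1 h5) (-t) (by
        simpa using h.ball_sub_one (h4.trans h1) hx) h7
      simp at this
      exact hxV this
    simp [dq, hu.zero x (h.ball_sub h4 hx) hxV, hu.zero _ h5 h6]
  · exact dq_contDiffOn hu.smooth t (b i) (fun x hx => h.shift h1 hi hx ht) (h.mono h4)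

lemma I2_integrable {A : Set E} (hA : IsOpen A) {g : E → ℝ} (hg : ContinuousOn g A) {M : ℝ≥0∞}
    (hM : M ≠ ⊤) (h : I2 μ A g ≤ M) :
    IntegrableOn (fun x => g x ^ 2) A μ ∧ ∫ x in A, g x ^ 2 ∂μ ≤ M.toReal := by
  have hm : AEStronglyMeasurable (fun x => g x ^ 2) (μ.restrict A) :=
    (hg.pow 2).aestronglyMeasurable hA.measurableSet
  have hn : 0 ≤ᵐ[μ.restrict A] fun x => g x ^ 2 := Eventually.of_forall fun x => sq_nonneg _
  constructor
  · refine ⟨hm, ?_⟩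
    rw [hasFiniteIntegral_iff_ofReal hn]
    exact lt_of_le_of_lt h hM.lt_top
  · rw [integral_eq_lintegral_of_nonneg_ae hn hm]
    exact ENNReal.toReal_mono hM h

lemma ofReal_bound {N Q M' : ℝ} {M : ℝ≥0∞} (hM : M ≠ ⊤) (hN : 0 ≤ N) (hQ : Q ≤ M.toReal)
    (hM' : M' ≤ M.toReal) :
    ENNReal.ofReal (4 * (3 * N + 1) * Q + 8 * M') ≤ (Real.toNNReal (12 * N + 12) : ℝ≥0∞) * M := by
  have : (Real.toNNReal (12 * N + 12) : ℝ≥0∞) * M = ENNReal.ofReal ((12 * N + 12) * M.toReal) := by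
    rw [ENNReal.ofReal_mul (by linarith), ENNReal.ofReal_toReal hM]; rfl
  rw [this]
  apply ENNReal.ofReal_le_ofReal
  nlinarith [mul_le_mul_of_nonneg_left hQ (show 0 ≤ 4 * (3 * N + 1) by linarith)]

lemma test_L2 {G : Set E} (hG : IsOpen G) {f : E → ℝ} (hf : ContinuousOn f G)
    (hi : IntegrableOn (fun x => f x ^ 2) G μ) :
    MemLp (G.indicator f) 2 μ ∧ ∫ x, (G.indicator f x) ^ 2 ∂μ = ∫ x in G, f x ^ 2 ∂μ := by
  have hm : AEStronglyMeasurable (G.indicator f) μ :=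
    (aestronglyMeasurable_indicator_iff hG.measurableSet).2
      (hf.aestronglyMeasurable hG.measurableSet)
  have heq : (fun x => (G.indicator f x) ^ 2) = G.indicator (fun x => f x ^ 2) := by
    ext x; by_cases hx : x ∈ G <;> simp [hx]
  refine ⟨?_, ?_⟩
  · rw [memLp_two_iff_integrable_sq hm, heq]
    exact (integrable_indicator_iff hG.measurableSet).2 hi
  · rw [heq]; exact integral_indicator hG.measurableSet

/-- basic Caccioppoli -/
lemma Q0 (ι : Type*) [Fintype ι] {ρ ρ' : ℝ} (hρ : 0 < ρ) (hρ' : ρ < ρ') : ∃ C : ℝ≥0, ∀ (i0 : ι) (V : Set E) (y : E)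
    (R : ℝ) (b : ι → E), Loc i0 V y R b → ∀ (u : E → ℝ) (M : ℝ≥0∞), IsW V (ball y (ρ' * R)) u →
    I2 μ (V ∩ ball y (ρ' * R)) u ≤ M → I2 μ (V ∩ ball y (ρ' * R)) (Lop b u) ≤ M →
    ∀ i, I2 μ (V ∩ ball y (ρ * R)) (fun x => fderiv ℝ u x (b i)) ≤ C * M := by
  obtain ⟨K, hK0, hK⟩ := exists_cutoff E hρ hρ'
  have hN : 0 ≤ (Fintype.card ι * K ^ 2 : ℝ) := by positivity
  refine ⟨Real.toNNReal (12 * (Fintype.card ι * K ^ 2) + 12), ?_⟩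
  intro i0 V y R b h u M hu hM1 hM2 i
  rcases eq_or_ne M ⊤ with rfl | hM
  · rw [ENNReal.mul_top]
    · exact le_top
    · have : (0 : ℝ) < 12 * (Fintype.card ι * K ^ 2) + 12 := by linarith
      simpa using this
  obtain ⟨χ, c1, c2, c3, c4, c5, c6, c7⟩ := hK y R h.hR
  have hG := h.isOpen (ρ := ρ')
  obtain ⟨i1, i2⟩ := I2_integrable μ hG hu.smooth.continuousOn hM hM1
  have hfc := (Lop_contDiffOn b hG hu.smooth).continuousOn
  obtain ⟨j1, j2⟩ := I2_integrable μ hG hfc hM hM2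
  obtain ⟨k1, k2⟩ := test_L2 μ hG hfc j1
  refine (cacc_core μ b h.hV isOpen_ball isOpen_ball (h.ball_sub hρ'.le) hu c1 c2 c3 c4 c5 c6
    (fun x i => c7 x _ (h.hb i)) (M := ∫ x in V ∩ ball y (ρ' * R), Lop b u x ^ 2 ∂μ)
    i1 ?_ i).trans (ofReal_bound hM hN i2 j2)
  intro ψ hψ hψc hψG
  set f := (V ∩ ball y (ρ' * R)).indicator (Lop b u) with hf
  have e1 : ∀ x, ψ x * Lop b u x = ψ x * f x := by
    intro x
    by_cases hx : x ∈ V ∩ ball y (ρ' * R)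
    · rw [hf, indicator_of_mem hx]
    · rw [image_eq_zero_of_notMem_tsupport fun h => hx (hψG h)]; simp
  have hψ2 : MemLp ψ 2 μ := hψ.continuous.memLp_of_hasCompactSupport hψc
  simp_rw [e1]
  have e2 : |∫ x, ψ x * f x ∂μ| ≤ ∫ x, (1 / 2 * f x ^ 2 + 1 / 2 * ψ x ^ 2) ∂μ := by
    rw [← Real.norm_eq_abs]
    apply norm_integral_le_of_norm_le
    · exact (k1.integrable_sq.const_mul _).add (hψ2.integrable_sq.const_mul _)
    · refine Eventually.of_forall fun x => ?_
      rw [Real.norm_eq_abs, abs_le]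
      constructor <;> nlinarith [sq_nonneg (ψ x - f x), sq_nonneg (ψ x + f x)]
  rw [integral_add (k1.integrable_sq.const_mul _) (hψ2.integrable_sq.const_mul _),
    integral_const_mul, integral_const_mul, k2] at e2
  have e3 : 0 ≤ ∑ i, ∫ x, (fderiv ℝ ψ x (b i)) ^ 2 ∂μ :=
    Finset.sum_nonneg fun i _ => integral_nonneg fun x => sq_nonneg _
  have e4 : 0 ≤ ∫ x in V ∩ ball y (ρ' * R), Lop b u x ^ 2 ∂μ := integral_nonneg fun x => sq_nonneg _
  linarith

lemma integral_dq_sq_le {ψ : E → ℝ} (hψ : ContDiff ℝ ∞ ψ) (hψc : HasCompactSupport ψ) (b : E)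
    {h : ℝ} (hh : h ≠ 0) :
    Integrable (fun x => dq h b ψ x ^ 2) μ ∧
    ∫ x, dq h b ψ x ^ 2 ∂μ ≤ ∫ x, (fderiv ℝ ψ x b) ^ 2 ∂μ := by
  have hc : Continuous fun x => fderiv ℝ ψ x b :=
    (hψ.continuous_fderiv (by simp)).clm_apply continuous_const
  have hcs : HasCompactSupport fun x => (fderiv ℝ ψ x b) ^ 2 := by
    have h1 : HasCompactSupport fun x => fderiv ℝ ψ x b := hψc.fderiv_apply ℝ b
    exact h1.comp_left (g := fun t : ℝ => t ^ 2) (by simp)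
  have hInt : Integrable (fun x => (fderiv ℝ ψ x b) ^ 2) μ :=
    (hc.pow 2).integrable_of_hasCompactSupport hcs
  have hle := I2_dq_le μ isOpen_univ isOpen_univ hψ.contDiffOn b hh (fun x _ s _ => mem_univ _)
  have e1 : I2 μ univ (fun x => fderiv ℝ ψ x b) =
      ENNReal.ofReal (∫ x, (fderiv ℝ ψ x b) ^ 2 ∂μ) := by
    rw [ofReal_integral_eq_lintegral_ofReal hInt (Eventually.of_forall fun x => sq_nonneg _)]
    simp [I2]
  have hdc : Continuous (dq h b ψ) := by
    have := hψ.continuous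
    unfold dq; fun_prop
  have := I2_integrable μ isOpen_univ hdc.continuousOn (by rw [e1]; exact ENNReal.ofReal_ne_top) hle
  rw [e1, ENNReal.toReal_ofReal (integral_nonneg fun x => sq_nonneg _)] at this
  simpa using this

/-- tangential Caccioppoli -/
lemma Q1core (ι : Type*) [Fintype ι] {ρ ρ1 ρ2 : ℝ} (hρ : 0 < ρ) (hρ1 : ρ < ρ1) (hρ2 : ρ1 < ρ2) (h21 : ρ2 ≤ 1) :
    ∃ C : ℝ≥0, ∀ (i0 : ι) (V : Set E) (y : E)
    (R : ℝ) (b : ι → E), Loc i0 V y R b → ∀ (u : E → ℝ) (M : ℝ≥0∞), IsW V (ball y (ρ2 * R)) u →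
    ∀ (τ : ι) (t : ℝ), τ ≠ i0 → t ≠ 0 → |t| ≤ ρ2 - ρ1 →
    I2 μ (V ∩ ball y (ρ1 * R)) (dq t (b τ) u) ≤ M → I2 μ (V ∩ ball y (ρ2 * R)) (Lop b u) ≤ M →
    ∀ i, I2 μ (V ∩ ball y (ρ * R)) (fun x => fderiv ℝ (dq t (b τ) u) x (b i)) ≤ C * M := by
  obtain ⟨K, hK0, hK⟩ := exists_cutoff E hρ hρ1
  have hN : 0 ≤ (Fintype.card ι * K ^ 2 : ℝ) := by positivity
  refine ⟨Real.toNNReal (12 * (Fintype.card ι * K ^ 2) + 12), ?_⟩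
  intro i0 V y R b h u M hu τ t hτ ht0 ht hM1 hM2 i
  rcases eq_or_ne M ⊤ with rfl | hM
  · rw [ENNReal.mul_top]
    · exact le_top
    · have : (0 : ℝ) < 12 * (Fintype.card ι * K ^ 2) + 12 := by linarith
      simpa using this
  obtain ⟨χ, c1, c2, c3, c4, c5, c6, c7⟩ := hK y R h.hR
  have hG := h.isOpen (ρ := ρ2)
  have hG1 := h.isOpen (ρ := ρ1)
  have hw : IsW V (ball y (ρ1 * R)) (dq t (b τ) u) := h.isW_dq h21 hτ hu ht
  obtain ⟨i1, i2⟩ := I2_integrable μ hG1 hw.smooth.continuousOn hM hM1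
  have hfc := (Lop_contDiffOn b hG hu.smooth).continuousOn
  obtain ⟨j1, j2⟩ := I2_integrable μ hG hfc hM hM2
  obtain ⟨k1, k2⟩ := test_L2 μ hG hfc j1
  refine (cacc_core μ b h.hV isOpen_ball isOpen_ball (h.ball_sub hρ1.le) hw c1 c2 c3 c4 c5 c6
    (fun x i => c7 x _ (h.hb i)) (M := ∫ x in V ∩ ball y (ρ2 * R), Lop b u x ^ 2 ∂μ)
    i1 ?_ i).trans (ofReal_bound hM hN i2 j2)
  intro ψ hψ hψc hψG
  set f := (V ∩ ball y (ρ2 * R)).indicator (Lop b u) with hf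
  set a : E := t • b τ with ha
  have hshift : ∀ x ∈ V ∩ ball y (ρ1 * R), x + a ∈ V ∩ ball y (ρ2 * R) :=
    fun x hx => h.shift h21 hτ hx ht
  have e1 : ∀ x, ψ x * Lop b (dq t (b τ) u) x = t⁻¹ * (ψ x * f (x + a)) - t⁻¹ * (ψ x * f x) := by
    intro x
    by_cases hx : x ∈ V ∩ ball y (ρ1 * R)
    · rw [Lop_dq b hG1 hG hu.smooth t (b τ) hshift (h.mono hρ2.le) hx, hf,
        indicator_of_mem (h.mono hρ2.le hx), indicator_of_mem (hshift x hx)]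
      simp only [dq]; ring
    · rw [image_eq_zero_of_notMem_tsupport fun h => hx (hψG h)]; simp
  have hψ2 : MemLp ψ 2 μ := hψ.continuous.memLp_of_hasCompactSupport hψc
  have hψs : MemLp (fun x => ψ (x - a)) 2 μ :=
    hψ2.comp_measurePreserving (measurePreserving_sub_right μ a)
  have hfs : MemLp (fun x => f (x + a)) 2 μ :=
    k1.comp_measurePreserving (measurePreserving_add_right μ a)
  have p1 : Integrable (fun x => ψ x * f (x + a)) μ := hψ2.integrable_mul hfs
  have p2 : Integrable (fun x => ψ x * f x) μ := hψ2.integrable_mul k1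
  have p3 : Integrable (fun x => ψ (x - a) * f x) μ := hψs.integrable_mul k1
  have e5 : ∫ x, ψ x * f (x + a) ∂μ = ∫ x, ψ (x - a) * f x ∂μ := by
    rw [← integral_add_right_eq_self (fun x => ψ (x - a) * f x) a]
    simp
  have e6 : ∫ x, ψ x * Lop b (dq t (b τ) u) x ∂μ = -∫ x, dq (-t) (b τ) ψ x * f x ∂μ := by
    simp_rw [e1]
    rw [integral_sub (p1.const_mul _) (p2.const_mul _), integral_const_mul, integral_const_mul, e5,
      ← integral_const_mul, ← integral_const_mul, ← integral_sub (p3.const_mul _) (p2.const_mul _),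
      ← integral_neg]
    congr 1; ext x
    simp only [dq, neg_smul, ← ha, inv_neg, ← sub_eq_add_neg]
    ring
  obtain ⟨m1, m2⟩ := integral_dq_sq_le μ hψ hψc (b τ) (neg_ne_zero.2 ht0)
  have e2 : |∫ x, dq (-t) (b τ) ψ x * f x ∂μ| ≤
      ∫ x, (2 * f x ^ 2 + 1 / 8 * dq (-t) (b τ) ψ x ^ 2) ∂μ := by
    rw [← Real.norm_eq_abs]
    apply norm_integral_le_of_norm_le
    · exact (k1.integrable_sq.const_mul _).add (m1.const_mul _)
    · refine Eventually.of_forall fun x => ?_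
      rw [Real.norm_eq_abs, abs_le]
      constructor <;> nlinarith [sq_nonneg (dq (-t) (b τ) ψ x - 4 * f x),
        sq_nonneg (dq (-t) (b τ) ψ x + 4 * f x)]
  rw [integral_add (k1.integrable_sq.const_mul _) (m1.const_mul _),
    integral_const_mul, integral_const_mul, k2] at e2
  rw [e6, abs_neg]
  have e3 : ∫ x, (fderiv ℝ ψ x (b τ)) ^ 2 ∂μ ≤ ∑ i, ∫ x, (fderiv ℝ ψ x (b i)) ^ 2 ∂μ :=
    Finset.single_le_sum (f := fun i => ∫ x, (fderiv ℝ ψ x (b i)) ^ 2 ∂μ)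
      (fun i _ => integral_nonneg fun x => sq_nonneg _) (Finset.mem_univ τ)
  have e4 : 0 ≤ ∫ x, ψ x ^ 2 ∂μ := integral_nonneg fun x => sq_nonneg _
  linarith

/-- passing to the limit in difference quotients -/
lemma I2_le_of_dq {G : Set E} (hG : IsOpen G) {g : E → ℝ} (hg : ContDiffOn ℝ ∞ g G) (v : E)
    {δ : ℝ} (hδ : 0 < δ) {F : ℝ → E → ℝ} (hF : ∀ t, t ≠ 0 → |t| ≤ δ → ContDiffOn ℝ ∞ (F t) G)
    (hFg : ∀ t, t ≠ 0 → |t| ≤ δ → EqOn (F t) (dq t v g) G) {M : ℝ≥0∞}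
    (hM : ∀ t, t ≠ 0 → |t| ≤ δ → I2 μ G (F t) ≤ M) : I2 μ G (fun x => fderiv ℝ g x v) ≤ M := by
  set t : ℕ → ℝ := fun k => δ * (1 / (k + 1)) with ht
  have ht0 : ∀ k, t k ≠ 0 := fun k => by simp only [ht]; positivity
  have htd : ∀ k, |t k| ≤ δ := by
    intro k
    have h1 : 0 ≤ t k := by simp only [ht]; positivity
    rw [abs_of_nonneg h1]
    simp only [ht]
    have : (1 : ℝ) / (k + 1) ≤ 1 := by
      rw [div_le_one (by positivity)]; linarith [Nat.cast_nonneg (α := ℝ) k]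
    nlinarith
  have htl : Tendsto t atTop (𝓝 0) := by
    have := (tendsto_one_div_add_atTop_nhds_zero_nat (𝕜 := ℝ)).const_mul δ
    simpa [ht] using this
  refine lintegral_le_of_ae_tendsto (g := fun k x => ENNReal.ofReal (F (t k) x ^ 2)) ?_ ?_
    (fun k => hM _ (ht0 k) (htd k))
  · intro k
    exact (ENNReal.continuous_ofReal.comp_continuousOn
      ((hF _ (ht0 k) (htd k)).continuousOn.pow 2)).aemeasurable hG.measurableSet
  · filter_upwards [ae_restrict_mem hG.measurableSet] with x hx
    have h1 := dq_tendsto ((hg.contDiffAt (hG.mem_nhds hx)).differentiableAt (by simp)) v htl ht0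
    have h2 := (ENNReal.continuous_ofReal.tendsto _).comp (h1.pow 2)
    refine h2.congr fun k => ?_
    simp only [Function.comp]
    rw [hFg _ (ht0 k) (htd k) hx]

/-- tangential regularity -/
lemma Qk (ι : Type*) [Fintype ι] (i0 : ι) (k : ℕ) : ∀ {ρ ρ' : ℝ}, 0 < ρ → ρ < ρ' → ρ' ≤ 1 → ∃ C : ℝ≥0, ∀ (V : Set E) (y : E)
    (R : ℝ) (b : ι → E), Loc i0 V y R b → ∀ (u : E → ℝ) (M : ℝ≥0∞), IsW V (ball y (ρ' * R)) u →
    I2 μ (V ∩ ball y (ρ' * R)) u ≤ M →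
    (∀ L : List ι, L.length ≤ k - 1 → I2 μ (V ∩ ball y (ρ' * R)) (dl (L.map b) (Lop b u)) ≤ M) →
    ∀ T : List ι, T.length = k → i0 ∉ T →
    ∀ i, I2 μ (V ∩ ball y (ρ * R)) (dl (b i :: T.map b) u) ≤ C * M := by
  induction k with
  | zero =>
    intro ρ ρ' h1 h2 h3
    obtain ⟨C, hC⟩ := Q0 μ ι h1 h2
    refine ⟨C, fun V y R b h u M hu hM1 hM2 T hT _ i => ?_⟩
    have := hC i0 V y R b h u M hu hM1 (hM2 [] (by simp)) i
    rw [List.length_eq_zero_iff] at hT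
    subst hT
    exact this
  | succ k ih =>
    intro ρ ρ' h1 h2 h3
    obtain ⟨ρ2, hρ2, hρ2'⟩ := exists_between h2
    obtain ⟨ρ1, hρ1, hρ12⟩ := exists_between hρ2
    obtain ⟨C0, hC0⟩ := Q0 μ ι (h1.trans hρ2) hρ2'
    -- the key claim
    have key : ∃ C : ℝ≥0, ∀ (V : Set E) (y : E)
        (R : ℝ) (b : ι → E), Loc i0 V y R b → ∀ (u : E → ℝ) (M : ℝ≥0∞),
        IsW V (ball y (ρ' * R)) u → I2 μ (V ∩ ball y (ρ' * R)) u ≤ M →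
        (∀ L : List ι, L.length ≤ k →
          I2 μ (V ∩ ball y (ρ' * R)) (dl (L.map b) (Lop b u)) ≤ M) →
        ∀ τ : ι, τ ≠ i0 → ∀ T : List ι, T.length = k → i0 ∉ T → ∀ i, ∀ t : ℝ, t ≠ 0 →
        |t| ≤ ρ2 - ρ1 →
        I2 μ (V ∩ ball y (ρ * R)) (dl (b i :: T.map b) (dq t (b τ) u)) ≤ C * M := by
      have hdq : ∀ (V : Set E) (y : E)
          (R : ℝ) (b : ι → E), Loc i0 V y R b → ∀ (u : E → ℝ) (M : ℝ≥0∞),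
          IsW V (ball y (ρ' * R)) u → I2 μ (V ∩ ball y (ρ' * R)) u ≤ M →
          I2 μ (V ∩ ball y (ρ' * R)) (Lop b u) ≤ M → ∀ τ : ι, τ ≠ i0 → ∀ t : ℝ, t ≠ 0 →
          |t| ≤ ρ2 - ρ1 → I2 μ (V ∩ ball y (ρ1 * R)) (dq t (b τ) u) ≤ C0 * M := by
        intro V y R b h u M hu hM1 hM2 τ hτ t ht0 ht
        refine le_trans ?_ (hC0 i0 V y R b h u M hu hM1 hM2 τ)
        refine I2_dq_le μ (h.isOpen ρ1) (h.isOpen ρ2) (hu.smooth.mono (h.mono hρ2'.le)) (b τ) ht0 ?_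
        intro x hx s hs
        refine h.shift (hρ2'.le.trans h3) hτ hx ?_
        rw [abs_mul, abs_of_nonneg hs.1]
        exact (mul_le_of_le_one_left (abs_nonneg _) hs.2).trans ht
      rcases Nat.eq_zero_or_pos k with rfl | hk
      · obtain ⟨C1, hC1⟩ := Q1core μ ι h1 hρ1 hρ12 (hρ2'.le.trans h3)
        refine ⟨C1 * (C0 + 1), ?_⟩
        intro V y R b h u M hu hM1 hM2 τ hτ T hT _ i t ht0 ht
        rw [List.length_eq_zero_iff] at hT
        subst hT
        have hu2 : IsW V (ball y (ρ2 * R)) u := ⟨hu.cont.mono (h.ball_sub hρ2'.le),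
          fun x hx => hu.zero x (h.ball_sub hρ2'.le hx), hu.smooth.mono (h.mono hρ2'.le)⟩
        have := hC1 i0 V y R b h u ((C0 + 1) * M) hu2 τ t hτ ht0 ht
          ((hdq V y R b h u M hu hM1 (hM2 [] (by simp)) τ hτ t ht0 ht).trans (by
            gcongr; exact le_self_add))
          ((I2_mono μ (h.mono hρ2'.le) _).trans ((hM2 [] (by simp)).trans (by
            conv_lhs => rw [← one_mul M]
            gcongr; exact le_add_self))) i
        refine this.trans (le_of_eq ?_)
        push_cast; ring
      · obtain ⟨C1, hC1⟩ := ih h1 hρ1 (hρ12.le.trans (hρ2'.le.trans h3))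
        refine ⟨C1 * (C0 + 1), ?_⟩
        intro V y R b h u M hu hM1 hM2 τ hτ T hT hT0 i t ht0 ht
        have ht' : |t| ≤ ρ' - ρ1 := by linarith
        have := hC1 V y R b h (dq t (b τ) u) ((C0 + 1) * M) (h.isW_dq h3 hτ hu ht')
          ((hdq V y R b h u M hu hM1 (hM2 [] (by simp)) τ hτ t ht0 ht).trans (by
            gcongr; exact le_self_add)) ?_ T hT hT0 i
        · refine this.trans (le_of_eq ?_)
          push_cast; ring
        · intro L hL
          have hsh : ∀ x ∈ V ∩ ball y (ρ1 * R), x + t • b τ ∈ V ∩ ball y (ρ' * R) :=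
            fun x hx => h.shift h3 hτ hx ht'
          have hsub := h.mono (hρ12.le.trans hρ2'.le)
          have hf := Lop_contDiffOn b (h.isOpen ρ') hu.smooth
          have q1 : EqOn (dl (L.map b) (Lop b (dq t (b τ) u)))
              (dq t (b τ) (dl (L.map b) (Lop b u))) (V ∩ ball y (ρ1 * R)) :=
            (dl_congr (h.isOpen ρ1) (Lop_dq b (h.isOpen ρ1) (h.isOpen ρ') hu.smooth t (b τ) hsh
              hsub) _).trans (dl_dq (h.isOpen ρ1) (h.isOpen ρ') hf t (b τ) hsh hsub _)
          rw [I2_congr μ (h.isOpen ρ1).measurableSet q1]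
          refine (I2_dq_le μ (h.isOpen ρ1) (h.isOpen ρ')
            (dl_contDiffOn (h.isOpen ρ') hf (L.map b)) (b τ) ht0 ?_).trans ?_
          · intro x hx s hs
            refine h.shift h3 hτ hx ?_
            rw [abs_mul, abs_of_nonneg hs.1]
            exact (mul_le_of_le_one_left (abs_nonneg _) hs.2).trans ht'
          · have h4 := hM2 (τ :: L) (by simp; omega)
            refine h4.trans ?_
            conv_lhs => rw [← one_mul M]
            gcongr; exact le_add_self
    obtain ⟨C, hC⟩ := key
    refine ⟨C, ?_⟩
    intro V y R b h u M hu hM1 hM2 T hT hT0 i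
    match T, hT with
    | τ :: T', hT =>
      have hτ : τ ≠ i0 := fun h => hT0 (by simp [h])
      have hT' : i0 ∉ T' := fun h => hT0 (by simp [h])
      have hG := h.isOpen ρ
      have hus : ContDiffOn ℝ ∞ u (V ∩ ball y (ρ * R)) := hu.smooth.mono (h.mono h2.le)
      have hp : EqOn (dl (b i :: (τ :: T').map b) u) (dl (b τ :: b i :: T'.map b) u)
          (V ∩ ball y (ρ * R)) := dl_perm hG hus (List.Perm.swap _ _ _)
      rw [I2_congr μ hG.measurableSet hp]
      have hsh : ∀ t : ℝ, |t| ≤ ρ2 - ρ1 → ∀ x ∈ V ∩ ball y (ρ * R),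
          x + t • b τ ∈ V ∩ ball y (ρ' * R) :=
        fun t ht x hx => h.shift h3 hτ hx (by linarith)
      refine I2_le_of_dq μ hG (dl_contDiffOn hG hus (b i :: T'.map b)) (b τ)
        (δ := ρ2 - ρ1) (by linarith) (F := fun t => dl (b i :: T'.map b) (dq t (b τ) u)) ?_ ?_ ?_
      · intro t _ ht
        exact dl_contDiffOn hG (dq_contDiffOn hu.smooth t (b τ) (hsh t ht) (h.mono h2.le)) _
      · intro t _ ht
        exact dl_dq hG (h.isOpen ρ') hu.smooth t (b τ) (hsh t ht) (h.mono h2.le) _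
      · intro t ht0 ht
        exact hC V y R b h u M hu hM1 hM2 τ hτ T' (by simpa using hT) hT' i t ht0 ht

end loc
end KR

/-! ### Part E: all derivatives -/
namespace KR
open Filter Topology
open scoped ContDiff NNReal

section alld
set_option linter.unusedSectionVars false
variable {E : Type*} [NormedAddCommGroup E] [NormedSpace ℝ E] [FiniteDimensional ℝ E]
  [MeasurableSpace E] [BorelSpace E] (μ : Measure E) [μ.IsAddHaarMeasure]

lemma I2_sum_le {A : Set E} (hA : MeasurableSet A) {κ : Type*} (s : Finset κ) {g : κ → E → ℝ}
    (hg : ∀ i ∈ s, ContinuousOn (g i) A) :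
    I2 μ A (fun x => ∑ i ∈ s, g i x) ≤ (s.card : ℝ≥0∞) * ∑ i ∈ s, I2 μ A (g i) := by
  unfold I2
  have hm : ∀ i ∈ s, AEMeasurable (fun x => ENNReal.ofReal (g i x ^ 2)) (μ.restrict A) :=
    fun i hi => (((hg i hi).pow 2).aemeasurable hA).ennreal_ofReal
  rw [← lintegral_finsetSum' _ hm, ← lintegral_const_mul' _ _ (by simp)]
  apply lintegral_mono
  intro x
  beta_reduce
  rw [← ENNReal.ofReal_sum_of_nonneg (fun i _ => sq_nonneg _), ← ENNReal.ofReal_natCast,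
    ← ENNReal.ofReal_mul (by positivity)]
  exact ENNReal.ofReal_le_ofReal sq_sum_le_card_mul_sum_sq

lemma I2_sub_le {A : Set E} (hA : MeasurableSet A) {f g : E → ℝ}
    (hf : ContinuousOn f A) (hg : ContinuousOn g A) :
    I2 μ A (fun x => f x - g x) ≤ 2 * (I2 μ A f + I2 μ A g) := by
  unfold I2
  have hm : ∀ g : E → ℝ, ContinuousOn g A →
      AEMeasurable (fun x => ENNReal.ofReal (g x ^ 2)) (μ.restrict A) :=
    fun g hg => ((hg.pow 2).aemeasurable hA).ennreal_ofReal
  rw [← lintegral_add_left' (hm f hf), ← lintegral_const_mul' _ _ (by simp)]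
  apply lintegral_mono
  intro x
  beta_reduce
  rw [← ENNReal.ofReal_add (sq_nonneg _) (sq_nonneg _)]
  have : (2 : ℝ≥0∞) = ENNReal.ofReal 2 := by simp
  rw [this, ← ENNReal.ofReal_mul (by positivity)]
  apply ENNReal.ofReal_le_ofReal
  nlinarith [sq_nonneg (f x + g x)]

lemma allD (ι : Type*) [Fintype ι] (i0 : ι) (m : ℕ) :
    ∃ C : ℝ≥0, ∀ (V : Set E) (y : E) (R : ℝ) (b : ι → E), Loc i0 V y R b →
      ∀ (u : E → ℝ) (M : ℝ≥0∞), IsW V (ball y (1 * R)) u →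
      I2 μ (V ∩ ball y (1 * R)) u ≤ M →
      (∀ L : List ι, L.length ≤ m - 1 →
        I2 μ (V ∩ ball y (1 * R)) (dl (L.map b) (Lop b u)) ≤ M) →
      ∀ L : List ι, L.length ≤ m + 1 →
        I2 μ (V ∩ ball y (1 / 2 * R)) (dl (L.map b) u) ≤ C * M := by
  classical
  have key : ∀ c : ℕ, ∃ C : ℝ≥0, ∀ (V : Set E) (y : E) (R : ℝ) (b : ι → E), Loc i0 V y R b →
      ∀ (u : E → ℝ) (M : ℝ≥0∞), IsW V (ball y (1 * R)) u →
      I2 μ (V ∩ ball y (1 * R)) u ≤ M →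
      (∀ L : List ι, L.length ≤ m - 1 →
        I2 μ (V ∩ ball y (1 * R)) (dl (L.map b) (Lop b u)) ≤ M) →
      ∀ L : List ι, L.length ≤ m + 1 → L.count i0 ≤ c + 1 →
        I2 μ (V ∩ ball y (1 / 2 * R)) (dl (L.map b) u) ≤ C * M := by
    intro c
    induction c with
    | zero =>
      choose Ck hCk using fun k => Qk μ ι i0 k (ρ := 1 / 2) (ρ' := 1) (by norm_num) (by norm_num)
        le_rfl
      refine ⟨1 + ∑ k ∈ Finset.range (m + 1), Ck k, ?_⟩
      intro V y R b h u M hu hM1 hM2 L hL hc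
      have hG := h.isOpen (1 / 2)
      have hus : ContDiffOn ℝ ∞ u (V ∩ ball y (1 / 2 * R)) := hu.smooth.mono (h.mono (by norm_num))
      have main : ∀ (i : ι) (T : List ι), T.length ≤ m → i0 ∉ T →
          I2 μ (V ∩ ball y (1 / 2 * R)) (dl (b i :: T.map b) u) ≤
          ((1 + ∑ k ∈ Finset.range (m + 1), Ck k : ℝ≥0) : ℝ≥0∞) * M := by
        intro i T hT hT0
        refine (hCk T.length V y R b h u M hu hM1 (fun L hL => hM2 L (by omega)) T rfl hT0
          i).trans ?_
        gcongr
        refine le_trans ?_ le_add_self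
        exact Finset.single_le_sum (f := Ck) (fun _ _ => zero_le) (by simp; omega)
      by_cases h0 : i0 ∈ L
      · have hp := List.perm_cons_erase h0
        rw [I2_congr μ hG.measurableSet (dl_perm hG hus (hp.map b))]
        rw [List.map_cons]
        refine main i0 _ ?_ ?_
        · rw [List.length_erase_of_mem h0]; omega
        · rw [← List.count_eq_zero, List.count_erase_self]; omega
      · match L, hL with
        | [], _ =>
          rw [List.map_nil, dl_nil]
          refine (I2_mono μ (h.mono (by norm_num)) u).trans (hM1.trans ?_)
          conv_lhs => rw [← one_mul M]
          gcongr; push_cast; exact le_self_add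
        | i :: T, hL =>
          rw [List.map_cons]
          exact main i T (by simpa using hL) (fun h => h0 (by simp [h]))
    | succ c ih =>
      obtain ⟨C, hC⟩ := ih
      refine ⟨C + 2 * (1 + (Fintype.card ι) * (Fintype.card ι * C)), ?_⟩
      intro V y R b h u M hu hM1 hM2 L hL hc
      have hG := h.isOpen (1 / 2)
      have hus : ContDiffOn ℝ ∞ u (V ∩ ball y (1 / 2 * R)) := hu.smooth.mono (h.mono (by norm_num))
      by_cases hc' : L.count i0 ≤ c + 1
      · refine (hC V y R b h u M hu hM1 hM2 L hL hc').trans ?_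
        gcongr; push_cast; exact le_self_add
      have h0 : i0 ∈ L := List.count_pos_iff.1 (by omega)
      have h1 : i0 ∈ L.erase i0 := List.count_pos_iff.1 (by rw [List.count_erase_self]; omega)
      set T := (L.erase i0).erase i0 with hT
      have hTl : T.length = L.length - 2 := by
        rw [hT, List.length_erase_of_mem h1, List.length_erase_of_mem h0]; omega
      have hLl : 2 ≤ L.length := by
        have := List.count_le_length (a := i0) (l := L); omega
      have hTc : T.count i0 = L.count i0 - 2 := by
        rw [hT, List.count_erase_self, List.count_erase_self]; omega
      have hp : L.Perm (T ++ [i0, i0]) :=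
        ((List.perm_cons_erase h0).trans ((List.perm_cons_erase h1).cons _)).trans
          (List.perm_append_comm (l₁ := [i0, i0]) (l₂ := T))
      set s := (Finset.univ : Finset ι).erase i0 with hs
      have e1 : dl [b i0, b i0] u = fun x => Lop b u x - ∑ i ∈ s, dl [b i, b i] u x := by
        ext x
        unfold Lop
        rw [← Finset.add_sum_erase Finset.univ _ (Finset.mem_univ i0)]
        ring
      have hd : ∀ L : List E, ContDiffOn ℝ ∞ (dl L u) (V ∩ ball y (1 / 2 * R)) :=
        dl_contDiffOn hG hus
      have hLop := Lop_contDiffOn b hG hus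
      have e2 : EqOn (dl (L.map b) u) (fun x => dl (T.map b) (Lop b u) x -
          ∑ i ∈ s, dl ((T ++ [i, i]).map b) u x) (V ∩ ball y (1 / 2 * R)) := by
        refine (dl_perm hG hus (hp.map b)).trans ?_
        rw [List.map_append, dl_append]
        simp only [List.map_cons, List.map_nil]
        rw [e1]
        refine (dl_sub hG hLop (ContDiffOn.sum fun i _ => hd _) _).trans ?_
        intro x hx
        beta_reduce
        rw [dl_sum hG s (fun i => hd [b i, b i]) _ hx]
        simp only [List.map_append, dl_append, List.map_cons, List.map_nil]
      rw [I2_congr μ hG.measurableSet e2]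
      refine (I2_sub_le μ hG.measurableSet (dl_contDiffOn hG hLop _).continuousOn
        (ContDiffOn.sum fun i _ => hd _).continuousOn).trans ?_
      have b1 : I2 μ (V ∩ ball y (1 / 2 * R)) (dl (T.map b) (Lop b u)) ≤ M :=
        (I2_mono μ (h.mono (by norm_num)) _).trans (hM2 T (by omega))
      have b2 : I2 μ (V ∩ ball y (1 / 2 * R)) (fun x => ∑ i ∈ s, dl ((T ++ [i, i]).map b) u x) ≤
          Fintype.card ι * (Fintype.card ι * (C * M)) := by
        refine (I2_sum_le μ hG.measurableSet s (fun i _ => (hd _).continuousOn)).trans ?_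
        have hcard : (s.card : ℝ≥0∞) ≤ Fintype.card ι := by
          exact_mod_cast (Finset.card_le_univ s)
        refine mul_le_mul' hcard ?_
        refine (Finset.sum_le_sum (g := fun _ => (C : ℝ≥0∞) * M) fun i hi => ?_).trans ?_
        · refine hC V y R b h u M hu hM1 hM2 (T ++ [i, i]) ?_ ?_
          · rw [List.length_append, hTl]; simp; omega
          · rw [List.count_append, hTc]
            have : i ≠ i0 := (Finset.mem_erase.1 hi).1
            have : List.count i0 [i, i] = 0 := by simp [List.count_cons, this]
            omega
        · rw [Finset.sum_const, nsmul_eq_mul]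
          gcongr
      calc _ ≤ 2 * (M + Fintype.card ι * (Fintype.card ι * (C * M))) := by gcongr
        _ = ((2 * (1 + (Fintype.card ι) * (Fintype.card ι * C)) : ℝ≥0) : ℝ≥0∞) * M := by
          push_cast; ring
        _ ≤ _ := by gcongr; exact le_add_self
  obtain ⟨C, hC⟩ := key m
  refine ⟨C, fun V y R b h u M hu hM1 hM2 L hL => hC V y R b h u M hu hM1 hM2 L hL ?_⟩
  have := List.count_le_length (a := i0) (l := L); omega

end alld
end KR

/-! ### Part F: polyhedral geometry -/
namespace KR
open Filter Topology

section geom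
set_option linter.unusedSectionVars false
variable {E : Type*} [NormedAddCommGroup E] [InnerProductSpace ℝ E] [FiniteDimensional ℝ E]
  {ι : Type*} [Fintype ι]

/-- The affine functional attached to a hyperplane. -/
def ell (v : ι → E) (c : ι → ℝ) (i : ι) (x : E) : ℝ := ⟪v i, x⟫ - c i

/-- Two points having the same position with respect to all hyperplanes. -/
def SameS (v : ι → E) (c : ι → ℝ) (x x' : E) : Prop :=
  ∀ i, SignType.sign (ell v c i x) = SignType.sign (ell v c i x')

lemma SameS.symm {v : ι → E} {c : ι → ℝ} {x x' : E} (h : SameS v c x x') : SameS v c x' x :=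
  fun i => (h i).symm

lemma SameS.zero_iff {v : ι → E} {c : ι → ℝ} {x x' : E} (h : SameS v c x x') (i : ι) :
    ell v c i x = 0 ↔ ell v c i x' = 0 := by
  rw [← sign_eq_zero_iff, h i, sign_eq_zero_iff]

lemma ell_cont (v : ι → E) (c : ι → ℝ) (i : ι) : Continuous (ell v c i) := by
  unfold ell; fun_prop

lemma ell_add (v : ι → E) (c : ι → ℝ) (i : ι) (x w : E) :
    ell v c i (x + w) = ell v c i x + ⟪v i, w⟫ := by
  unfold ell; rw [inner_add_right]; ring

lemma dense_off (v : ι → E) (c : ι → ℝ) (hv : ∀ i, v i ≠ 0) :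
    Dense {z : E | ∀ i, ell v c i z ≠ 0} := by
  have : {z : E | ∀ i, ell v c i z ≠ 0} = ⋂ i, {z : E | ell v c i z ≠ 0} := by
    ext z; simp
  rw [this]
  refine dense_iInter_of_isOpen (fun i => isOpen_ne_fun (ell_cont v c i) continuous_const) ?_
  intro i
  rw [Metric.dense_iff]
  intro x r hr
  by_cases h : ell v c i x = 0
  · have hvi : 0 < ‖v i‖ := norm_pos_iff.2 (hv i)
    refine ⟨x + (r / 2 / ‖v i‖) • v i, ?_, ?_⟩
    · rw [mem_ball, dist_eq_norm, add_sub_cancel_left, norm_smul, Real.norm_eq_abs,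
        abs_of_pos (by positivity), div_mul_cancel₀ _ hvi.ne']
      linarith
    · change ell v c i _ ≠ 0
      rw [ell_add, h, zero_add, inner_smul_right, real_inner_self_eq_norm_sq]
      positivity
  · exact ⟨x, mem_ball_self hr, h⟩

lemma seg_in {U : Set E} (hU : IsOpen U) {z z' : E} (hz : z ∈ U)
    (h : ∀ w ∈ segment ℝ z z', w ∉ frontier U) : z' ∈ U := by
  have hc : IsPreconnected (segment ℝ z z') := (convex_segment z z').isPreconnected
  have := hc.subset_left_of_subset_union hU (isClosed_closure (s := U)).isOpen_compl
    (disjoint_left.2 fun x hx hx' => hx' (subset_closure hx)) ?_ ⟨z, left_mem_segment ℝ z z', hz⟩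
  · exact this (right_mem_segment ℝ z z')
  · intro w hw
    by_cases h1 : w ∈ closure U
    · left
      by_contra h2
      exact h w hw ⟨h1, by rwa [hU.interior_eq]⟩
    · exact Or.inr h1

lemma closure_sameS {v : ι → E} {c : ι → ℝ} (hv : ∀ i, v i ≠ 0) {U : Set E} (hU : IsOpen U)
    (hF : ∀ x ∈ frontier U, ∃ i, ell v c i x = 0) {x x' : E} (hx : x ∈ closure U)
    (hxx : SameS v c x x') : x' ∈ closure U := by
  have hev : ∀ᶠ w in 𝓝 (0 : E), ∀ i, ell v c i x ≠ 0 →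
      |⟪v i, w⟫| < |ell v c i x| ∧ |⟪v i, w⟫| < |ell v c i x'| := by
    rw [eventually_all]
    intro i
    by_cases h : ell v c i x = 0
    · exact Eventually.of_forall fun w hw => absurd h hw
    · have h' : ell v c i x' ≠ 0 := fun h2 => h ((hxx.zero_iff i).2 h2)
      have hcont : Tendsto (fun w : E => |⟪v i, w⟫|) (𝓝 0) (𝓝 0) := by
        have : Continuous fun w : E => |⟪v i, w⟫| := by fun_prop
        simpa using this.tendsto 0
      filter_upwards [hcont.eventually_lt_const (abs_pos.2 h),
        hcont.eventually_lt_const (abs_pos.2 h')] with w h1 h2 _ using ⟨h1, h2⟩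
  obtain ⟨δ, hδ, hδ'⟩ := Metric.eventually_nhds_iff.1 hev
  rw [Metric.mem_closure_iff]
  intro ε hε
  have hop : IsOpen (U ∩ ball x (min ε δ)) := hU.inter isOpen_ball
  have hne : (U ∩ ball x (min ε δ)).Nonempty := by
    obtain ⟨z, hz, hz'⟩ := Metric.mem_closure_iff.1 hx (min ε δ) (lt_min hε hδ)
    exact ⟨z, hz, by rwa [mem_ball, dist_comm]⟩
  obtain ⟨z, ⟨hzU, hzb⟩, hz0⟩ := (dense_off v c hv).inter_open_nonempty _ hop hne
  have hzx : ‖z - x‖ < min ε δ := by rwa [mem_ball, dist_eq_norm] at hzb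
  refine ⟨x' + (z - x), ?_, ?_⟩
  · refine seg_in hU hzU ?_
    intro w hw hwF
    rw [segment_eq_image_lineMap] at hw
    obtain ⟨s, ⟨hs0, hs1⟩, rfl⟩ := hw
    obtain ⟨i, hi⟩ := hF _ hwF
    have e1 : AffineMap.lineMap z (x' + (z - x)) s = x + (z - x) + s • (x' - x) := by
      rw [AffineMap.lineMap_apply]
      simp only [vsub_eq_sub, vadd_eq_add]
      have : x' + (z - x) - z = x' - x := by abel
      rw [this]; abel
    rw [e1, ell_add, ell_add, inner_smul_right] at hi
    have e2 : ⟪v i, x' - x⟫ = ell v c i x' - ell v c i x := by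
      unfold ell; rw [inner_sub_right]; ring
    have e3 : ell v c i z = ell v c i x + ⟪v i, z - x⟫ := by rw [← ell_add]; congr 1; abel
    rw [e2] at hi
    have h3 := hz0 i
    by_cases h : ell v c i x = 0
    · have h' := (hxx.zero_iff i).1 h
      rw [h, h'] at hi
      rw [h] at e3
      apply h3; linarith
    · obtain ⟨h1, h2⟩ := hδ' (y := z - x) (by
        rw [dist_zero_right]; exact hzx.trans_le (min_le_right _ _)) i h
      have hsg := hxx i
      rcases lt_or_gt_of_ne h with hlt | hgt
      · have hlt' : ell v c i x' < 0 := by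
          rw [← sign_eq_neg_one_iff, ← hsg, sign_eq_neg_one_iff]; exact hlt
        rw [abs_of_neg hlt] at h1
        rw [abs_of_neg hlt'] at h2
        have h4 := abs_lt.1 h1
        have h5 := abs_lt.1 h2
        rcases le_total (ell v c i x) (ell v c i x') with h6 | h6
        · nlinarith [mul_nonneg hs0 (sub_nonneg.2 h6),
            mul_nonneg (sub_nonneg.2 hs1) (sub_nonneg.2 h6)]
        · nlinarith [mul_nonneg hs0 (sub_nonneg.2 h6),
            mul_nonneg (sub_nonneg.2 hs1) (sub_nonneg.2 h6)]
      · have hgt' : 0 < ell v c i x' := by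
          rw [← sign_eq_one_iff, ← hsg, sign_eq_one_iff]; exact hgt
        rw [abs_of_pos hgt] at h1
        rw [abs_of_pos hgt'] at h2
        have h4 := abs_lt.1 h1
        have h5 := abs_lt.1 h2
        rcases le_total (ell v c i x) (ell v c i x') with h6 | h6
        · nlinarith [mul_nonneg hs0 (sub_nonneg.2 h6),
            mul_nonneg (sub_nonneg.2 hs1) (sub_nonneg.2 h6)]
        · nlinarith [mul_nonneg hs0 (sub_nonneg.2 h6),
            mul_nonneg (sub_nonneg.2 hs1) (sub_nonneg.2 h6)]
  · rw [dist_eq_norm, sub_add_cancel_left, norm_neg]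
    exact hzx.trans_le (min_le_left _ _)

lemma frontier_sameS {v : ι → E} {c : ι → ℝ} (hv : ∀ i, v i ≠ 0) {Ω : Set E} (hU : IsOpen Ω)
    (hfc : frontier Ω = frontier (closure Ω))
    (hF : ∀ x ∈ frontier Ω, ∃ i, ell v c i x = 0) {x x' : E} (hx : x ∈ frontier Ω)
    (hxx : SameS v c x x') : x' ∈ frontier Ω := by
  have e : frontier (closure Ω) = closure Ω ∩ closure (closure Ω)ᶜ := by
    rw [frontier_eq_closure_inter_closure, closure_closure]
  rw [hfc, e] at hx ⊢
  refine ⟨closure_sameS hv hU hF hx.1 hxx, ?_⟩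
  refine closure_sameS hv isClosed_closure.isOpen_compl ?_ hx.2 hxx
  intro y hy
  rw [frontier_compl, ← hfc] at hy
  exact hF y hy

lemma compact_unif {K : Set E} (hK : IsCompact K) (pair : E → E → Prop) (f : E → ℝ)
    (h : ∀ p ∈ K, ∃ C > (0 : ℝ), ∃ r > (0 : ℝ), ∀ y1 ∈ ball p r, ∀ y2 ∈ ball p r, pair y1 y2 →
      f y1 ≤ C * dist y1 y2) :
    ∃ C > (0 : ℝ), ∃ r > (0 : ℝ), ∀ y1 ∈ K, ∀ y2, dist y1 y2 < r → pair y1 y2 →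
      f y1 ≤ C * dist y1 y2 := by
  refine hK.induction_on (p := fun T => ∃ C > (0 : ℝ), ∃ r > (0 : ℝ), ∀ y1 ∈ T, ∀ y2,
    dist y1 y2 < r → pair y1 y2 → f y1 ≤ C * dist y1 y2) ?_ ?_ ?_ ?_
  · exact ⟨1, one_pos, 1, one_pos, fun y1 h => h.elim⟩
  · rintro s t hst ⟨C, hC, r, hr, h⟩
    exact ⟨C, hC, r, hr, fun y1 h1 => h y1 (hst h1)⟩
  · rintro s t ⟨C, hC, r, hr, h⟩ ⟨C', hC', r', hr', h'⟩
    refine ⟨max C C', lt_max_of_lt_left hC, min r r', lt_min hr hr', ?_⟩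
    rintro y1 (h1 | h1) y2 hd hp
    · refine (h y1 h1 y2 (hd.trans_le (min_le_left _ _)) hp).trans ?_
      gcongr; exact le_max_left _ _
    · refine (h' y1 h1 y2 (hd.trans_le (min_le_right _ _)) hp).trans ?_
      gcongr; exact le_max_right _ _
  · intro p hp
    obtain ⟨C, hC, r, hr, h⟩ := h p hp
    refine ⟨ball p (r / 2), mem_nhdsWithin_of_mem_nhds (ball_mem_nhds p (by positivity)),
      C, hC, r / 2, by positivity, ?_⟩
    intro y1 h1 y2 hd hpr
    refine h y1 (ball_subset_ball (by linarith) h1) y2 ?_ hpr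
    rw [mem_ball] at h1 ⊢
    have := dist_triangle y2 y1 p
    rw [dist_comm y2 y1] at this
    linarith

/-- the singular set, in terms of the functionals -/
def Sing (v : ι → E) (c : ι → ℝ) (X : Set E) : Set E :=
  {x | x ∈ X ∧ ∃ i j, i ≠ j ∧ ell v c i x = 0 ∧ ell v c j x = 0}

/-- Points of `X` on different hyperplanes. -/
def Pr (v : ι → E) (c : ι → ℝ) (X : Set E) (y1 y2 : E) : Prop :=
  y1 ∈ X ∧ y2 ∈ X ∧ ∃ i j, i ≠ j ∧ ell v c i y1 = 0 ∧ ell v c j y2 = 0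

lemma Sing_closed (v : ι → E) (c : ι → ℝ) {X : Set E} (hX : IsClosed X) :
    IsClosed (Sing v c X) := by
  have : Sing v c X = X ∩ ⋃ i, ⋃ j, ⋃ (_ : i ≠ j), {x | ell v c i x = 0} ∩ {x | ell v c j x = 0} := by
    ext x; simp only [Sing, mem_ofPred_eq, mem_inter_iff, mem_iUnion, exists_prop]
  rw [this]
  refine hX.inter (isClosed_iUnion_of_finite fun i => isClosed_iUnion_of_finite fun j =>
    isClosed_iUnion_of_finite fun _ => ?_)
  exact (isClosed_eq (ell_cont v c i) continuous_const).inter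
    (isClosed_eq (ell_cont v c j) continuous_const)

lemma sign_near (v : ι → E) (c : ι → ℝ) (p : E) : ∃ r > (0 : ℝ), ∀ x ∈ ball p r, ∀ i,
    ell v c i p ≠ 0 → SignType.sign (ell v c i x) = SignType.sign (ell v c i p) := by
  have : ∀ᶠ x in 𝓝 p, ∀ i, ell v c i p ≠ 0 →
      SignType.sign (ell v c i x) = SignType.sign (ell v c i p) := by
    rw [eventually_all]
    intro i
    by_cases h : ell v c i p = 0
    · exact Eventually.of_forall fun _ h' => absurd h h'
    · have h1 : ContinuousAt (fun x => SignType.sign (ell v c i x)) p :=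
        (continuousAt_sign_of_ne_zero h).comp (ell_cont v c i).continuousAt
      have h2 := h1.eventually_mem (s := {SignType.sign (ell v c i p)})
        (by simp)
      filter_upwards [h2] with x hx _ using hx
  obtain ⟨r, hr, h⟩ := Metric.eventually_nhds_iff.1 this
  exact ⟨r, hr, fun x hx => h hx⟩

open Classical in
lemma local_G (v : ι → E) (c : ι → ℝ) {X : Set E} (hX : IsClosed X)
    (hinv : ∀ x ∈ X, ∀ x', SameS v c x x' → x' ∈ X) :
    ∀ (N : ℕ) (p : E), (Finset.univ.filter fun i => ell v c i p = 0).card = N →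
    ∃ C > (0 : ℝ), ∃ r > (0 : ℝ), ∀ y1 ∈ ball p r, ∀ y2 ∈ ball p r, Pr v c X y1 y2 →
      infDist y1 (Sing v c X) ≤ C * dist y1 y2 := by
  intro N
  induction N using Nat.strong_induction_on with
  | _ N ih =>
  intro p hN
  obtain ⟨r3, hr3, hsn⟩ := sign_near v c p
  by_cases hpX : p ∉ X
  · obtain ⟨r, hr, hb⟩ := Metric.isOpen_iff.1 hX.isOpen_compl p hpX
    exact ⟨1, one_pos, r, hr, fun y1 h1 y2 h2 hp => absurd hp.1 (hb h1)⟩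
  push Not at hpX
  set r0 := r3 / 4 with hr0
  have hr0p : 0 < r0 := by positivity
  have hon : ∀ x ∈ ball p r3, ∀ i, ell v c i x = 0 → ell v c i p = 0 := by
    intro x hx i h
    by_contra h'
    have := hsn x hx i h'
    rw [h, sign_zero] at this
    exact h' (sign_eq_zero_iff.1 this.symm)
  let A0 : Submodule ℝ E := ⨅ i : {i // ell v c i p = 0}, (ℝ ∙ (v i))ᗮ
  have hA0 : ∀ a, a ∈ A0 ↔ ∀ i, ell v c i p = 0 → ⟪v i, a⟫ = 0 := by
    intro a
    simp only [A0, Submodule.mem_iInf, Submodule.mem_orthogonal_singleton_iff_inner_right,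
      Subtype.forall]
  have hmk : ∀ (x x' : E) (k : ℝ), 0 < k → x ∈ ball p r3 → x' ∈ ball p r3 →
      (∀ i, ell v c i p = 0 → ⟪v i, x' - p⟫ = k * ⟪v i, x - p⟫) → SameS v c x x' := by
    intro x x' k hk hx hx' h i
    by_cases hi : ell v c i p = 0
    · have e1 : ell v c i x = ⟪v i, x - p⟫ := by
        rw [← add_sub_cancel p x, ell_add, hi]; simp
      have e2 : ell v c i x' = ⟪v i, x' - p⟫ := by
        rw [← add_sub_cancel p x', ell_add, hi]; simp
      rw [e1, e2, h i hi, sign_mul, sign_pos hk, one_mul]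
    · rw [hsn x hx i hi, hsn x' hx' i hi]
  -- compact sphere
  let K : Set E := (fun w => p + w) '' (sphere (0 : E) r0 ∩ (A0ᗮ : Set E))
  have hK : IsCompact K :=
    (((isCompact_sphere (0 : E) r0).inter_right (Submodule.closed_of_finiteDimensional A0ᗮ))).image
      (by fun_prop)
  have hKih : ∀ q ∈ K, ∃ C > (0 : ℝ), ∃ r > (0 : ℝ), ∀ y1 ∈ ball q r, ∀ y2 ∈ ball q r,
      Pr v c X y1 y2 → infDist y1 (Sing v c X) ≤ C * dist y1 y2 := by
    rintro q ⟨w, ⟨hw1, hw2⟩, rfl⟩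
    refine ih _ ?_ (p + w) rfl
    rw [← hN]
    apply Finset.card_lt_card
    have hwn : ‖w‖ = r0 := by simpa using hw1
    have hqb : p + w ∈ ball p r3 := by
      rw [mem_ball, dist_eq_norm, add_sub_cancel_left, hwn]; linarith
    rw [Finset.ssubset_iff_of_subset]
    · by_contra hcon
      push Not at hcon
      have hwA : w ∈ A0 := by
        rw [hA0]
        intro i hi
        have h1 := hcon i (by simpa using hi)
        simp only [Finset.mem_filter, Finset.mem_univ, true_and] at h1
        rw [ell_add, hi, zero_add] at h1
        exact h1
      have : w = 0 := by
        have := Submodule.inner_right_of_mem_orthogonal hwA hw2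
        exact inner_self_eq_zero.1 this
      rw [this, norm_zero] at hwn
      linarith
    · intro i hi
      simp only [Finset.mem_filter, Finset.mem_univ, true_and] at hi ⊢
      exact hon _ hqb i hi
  obtain ⟨C, hC, r', hr', hU⟩ := compact_unif hK (Pr v c X) _ hKih
  set r := min r' r0 with hr
  have hrp : 0 < r := lt_min hr' hr0p
  refine ⟨max C (r0 / r), lt_max_of_lt_left hC, r0, hr0p, ?_⟩
  intro y1 hy1 y2 hy2 hpr
  obtain ⟨hy1X, hy2X, i1, i2, hi12, hi1, hi2⟩ := hpr
  have hsub : ball p r0 ⊆ ball p r3 := ball_subset_ball (by linarith)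
  have hi1p := hon y1 (hsub hy1) i1 hi1
  have hi2p := hon y2 (hsub hy2) i2 hi2
  obtain ⟨a, ha, w, hw, haw⟩ := A0.exists_add_mem_mem_orthogonal (y1 - p)
  have hy1e : y1 = p + a + w := by rw [add_assoc, ← haw]; abel
  have hy1n : ‖y1 - p‖ < r0 := by rwa [mem_ball, dist_eq_norm] at hy1
  have hpyth : ‖y1 - p‖ * ‖y1 - p‖ = ‖a‖ * ‖a‖ + ‖w‖ * ‖w‖ := by
    rw [haw]
    exact norm_add_sq_eq_norm_sq_add_norm_sq_real (Submodule.inner_right_of_mem_orthogonal ha hw)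
  have han : ‖a‖ ≤ ‖y1 - p‖ := by
    apply abs_le_of_sq_le_sq' _ (norm_nonneg _) |>.2
    nlinarith [norm_nonneg w]
  have hwn : ‖w‖ ≤ ‖y1 - p‖ := by
    apply abs_le_of_sq_le_sq' _ (norm_nonneg _) |>.2
    nlinarith [norm_nonneg a]
  have haA := (hA0 a).1 ha
  have hpS : p ∈ Sing v c X := ⟨hpX, i1, i2, hi12, hi1p, hi2p⟩
  have hpab : p + a ∈ ball p r3 := by
    rw [mem_ball, dist_eq_norm, add_sub_cancel_left]; linarith
  have hpaS : p + a ∈ Sing v c X := by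
    have hs : SameS v c p (p + a) := by
      refine hmk p (p + a) 1 one_pos (mem_ball_self hr3) hpab ?_
      intro i hi
      rw [add_sub_cancel_left, haA i hi]; simp
    exact ⟨hinv p hpX _ hs, i1, i2, hi12, (hs.zero_iff _).1 hi1p, (hs.zero_iff _).1 hi2p⟩
  have hd1 : infDist y1 (Sing v c X) ≤ ‖w‖ := by
    refine (infDist_le_dist_of_mem hpaS).trans (le_of_eq ?_)
    rw [dist_eq_norm, hy1e, add_sub_cancel_left]
  rcases eq_or_ne w 0 with hw0 | hw0
  · rw [hw0, norm_zero] at hd1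
    refine hd1.trans (by positivity)
  set ρ := ‖w‖ with hρ
  have hρp : 0 < ρ := norm_pos_iff.2 hw0
  by_cases hfar : r / r0 * ρ ≤ dist y1 y2
  · refine hd1.trans ?_
    calc ρ = r0 / r * (r / r0 * ρ) := by field_simp
      _ ≤ max C (r0 / r) * dist y1 y2 := by gcongr; exact le_max_right _ _
  push Not at hfar
  set k := r0 / ρ with hk
  have hkp : 0 < k := by positivity
  set q1 := p + k • w with hq1
  set q2 := p + k • (y2 - p - a) with hq2
  have hq12 : dist q1 q2 = k * dist y1 y2 := by
    rw [dist_eq_norm, dist_eq_norm, hq1, hq2, add_sub_add_left_eq_sub, ← smul_sub, norm_smul,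
      Real.norm_eq_abs, abs_of_pos hkp]
    congr 2
    rw [hy1e]; abel
  have hq12r : dist q1 q2 < r := by
    rw [hq12]
    calc k * dist y1 y2 < k * (r / r0 * ρ) := by gcongr
      _ = r := by rw [hk]; field_simp
  have hkw : ‖k • w‖ = r0 := by
    rw [norm_smul, Real.norm_eq_abs, abs_of_pos hkp, ← hρ, hk]; field_simp
  have hq1p : dist q1 p = r0 := by rw [dist_eq_norm, hq1, add_sub_cancel_left, hkw]
  have hq1b : q1 ∈ ball p r3 := by rw [mem_ball, hq1p]; linarith
  have hq2b : q2 ∈ ball p r3 := by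
    rw [mem_ball]
    have := dist_triangle q2 q1 p
    rw [dist_comm q2 q1] at this
    have : r ≤ r0 := min_le_right _ _
    linarith
  have hs1 : SameS v c y1 q1 := by
    refine hmk y1 q1 k hkp (hsub hy1) hq1b ?_
    intro i hi
    rw [hq1, add_sub_cancel_left, inner_smul_right, haw, inner_add_right, haA i hi, zero_add]
  have hs2 : SameS v c y2 q2 := by
    refine hmk y2 q2 k hkp (hsub hy2) hq2b ?_
    intro i hi
    rw [hq2, add_sub_cancel_left, inner_smul_right, inner_sub_right _ _ a, haA i hi, sub_zero]
  have hq1K : q1 ∈ K :=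
    ⟨k • w, ⟨by simpa using hkw, (A0ᗮ).smul_mem k hw⟩, rfl⟩
  have hq := hU q1 hq1K q2 (hq12r.trans_le (min_le_left _ _))
    ⟨hinv _ hy1X _ hs1, hinv _ hy2X _ hs2, i1, i2, hi12, (hs1.zero_iff _).1 hi1,
      (hs2.zero_iff _).1 hi2⟩
  obtain ⟨s, hsS, hsd⟩ := (Sing_closed v c hX).exists_infDist_eq_dist ⟨p, hpS⟩ q1
  have hq1s : dist q1 s ≤ r0 := by
    rw [← hsd, ← hq1p]; exact infDist_le_dist_of_mem hpS
  have hsb : dist s p ≤ 2 * r0 := by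
    have := dist_triangle s q1 p
    rw [dist_comm s q1] at this
    linarith
  have hsb' : s ∈ ball p r3 := by rw [mem_ball]; linarith
  set y' := p + a + k⁻¹ • (s - p) with hy'
  have hkinv : k⁻¹ ≤ 1 := by
    rw [hk, inv_div]
    exact (div_le_one hr0p).2 (by linarith)
  have hy'b : y' ∈ ball p r3 := by
    rw [mem_ball, dist_eq_norm, hy', add_assoc, add_sub_cancel_left]
    have h1 : ‖k⁻¹ • (s - p)‖ ≤ 2 * r0 := by
      rw [norm_smul, Real.norm_eq_abs, abs_of_pos (by positivity), ← dist_eq_norm]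
      calc k⁻¹ * dist s p ≤ 1 * (2 * r0) := by gcongr
        _ = _ := one_mul _
    have := norm_add_le a (k⁻¹ • (s - p))
    linarith
  have hs3 : SameS v c s y' := by
    refine hmk s y' k⁻¹ (by positivity) hsb' hy'b ?_
    intro i hi
    rw [hy', add_assoc, add_sub_cancel_left, inner_add_right, haA i hi, zero_add, inner_smul_right]
  have hy'S : y' ∈ Sing v c X := by
    obtain ⟨hsX, j1, j2, hj, h1, h2⟩ := hsS
    exact ⟨hinv _ hsX _ hs3, j1, j2, hj, (hs3.zero_iff _).1 h1, (hs3.zero_iff _).1 h2⟩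
  have hdy : dist y1 y' = k⁻¹ * dist q1 s := by
    have : y1 - y' = k⁻¹ • (q1 - s) := by
      rw [hy', hy1e, hq1, add_sub_add_left_eq_sub]
      rw [show p + k • w - s = k • w - (s - p) by abel, smul_sub k⁻¹ (k • w), smul_smul,
        inv_mul_cancel₀ hkp.ne', one_smul]
    rw [dist_eq_norm, this, norm_smul, Real.norm_eq_abs, abs_of_pos (by positivity), dist_eq_norm]
  calc infDist y1 (Sing v c X) ≤ dist y1 y' := infDist_le_dist_of_mem hy'S
    _ = k⁻¹ * dist q1 s := hdy
    _ ≤ k⁻¹ * (C * dist q1 q2) := by rw [← hsd]; gcongr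
    _ = C * dist y1 y2 := by rw [hq12]; field_simp
    _ ≤ _ := by gcongr; exact le_max_left _ _

lemma global_G (v : ι → E) (c : ι → ℝ) {X : Set E} (hX : IsCompact X)
    (hS : (Sing v c X).Nonempty)
    (hinv : ∀ x ∈ X, ∀ x', SameS v c x x' → x' ∈ X) :
    ∃ C > (0 : ℝ), ∀ y1 y2, Pr v c X y1 y2 → infDist y1 (Sing v c X) ≤ C * dist y1 y2 := by
  classical
  obtain ⟨C, hC, r, hr, h⟩ := compact_unif hX (Pr v c X) (fun y => infDist y (Sing v c X))
    (fun p _ => local_G v c hX.isClosed hinv _ p rfl)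
  refine ⟨max C ((diam X) / r), lt_max_of_lt_left hC, ?_⟩
  intro y1 y2 hp
  by_cases hd : dist y1 y2 < r
  · refine (h y1 hp.1 y2 hd hp).trans ?_
    gcongr; exact le_max_left _ _
  · push Not at hd
    obtain ⟨s, hs⟩ := hS
    calc infDist y1 (Sing v c X) ≤ dist y1 s := infDist_le_dist_of_mem hs
      _ ≤ diam X := dist_le_diam_of_mem hX.isBounded hp.1 hs.1
      _ = diam X / r * r := by field_simp
      _ ≤ max C (diam X / r) * dist y1 y2 := by
        have : 0 ≤ diam X := diam_nonneg
        gcongr; exact le_max_right _ _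

/-- Flatness at the scale of the distance to the singular set. -/
lemma flat {v : ι → E} {c : ι → ℝ} (hv : ∀ i, v i ≠ 0) {Ω : Set E} (hU : IsOpen Ω)
    (hb : Bornology.IsBounded Ω) (hfc : frontier Ω = frontier (closure Ω))
    (hF : ∀ x ∈ frontier Ω, ∃ i, ell v c i x = 0)
    (hS : (Sing v c (frontier Ω)).Nonempty) :
    ∃ κ > (0 : ℝ), κ ≤ 1 / 2 ∧ ∀ y, ∃ i, ∀ x ∈ ball y (κ * infDist y (Sing v c (frontier Ω))),
      x ∈ frontier Ω → ell v c i x = 0 := by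
  have hcomp : IsCompact (frontier Ω) :=
    Metric.isCompact_of_isClosed_isBounded isClosed_frontier
      (hb.closure.subset frontier_subset_closure)
  obtain ⟨C, hC, hG⟩ := global_G v c hcomp hS
    (fun x hx x' => frontier_sameS hv hU hfc hF hx)
  set S := Sing v c (frontier Ω)
  refine ⟨min (1 / 2) (1 / (4 * C)), by positivity, min_le_left _ _, ?_⟩
  set κ := min (1 / 2) (1 / (4 * C))
  intro y
  by_cases hne : ∃ y1 ∈ ball y (κ * infDist y S), y1 ∈ frontier Ω
  · obtain ⟨y1, hy1, hy1F⟩ := hne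
    obtain ⟨i, hi⟩ := hF y1 hy1F
    refine ⟨i, ?_⟩
    intro y2 hy2 hy2F
    obtain ⟨j, hj⟩ := hF y2 hy2F
    by_cases hij : i = j
    · rwa [hij]
    exfalso
    have h1 := hG y1 y2 ⟨hy1F, hy2F, i, j, hij, hi, hj⟩
    rw [mem_ball] at hy1 hy2
    have h2 : dist y1 y2 ≤ dist y1 y + dist y2 y := dist_triangle_right y1 y2 y
    have h3 : infDist y S ≤ infDist y1 S + dist y y1 := infDist_le_infDist_add_dist
    rw [dist_comm y y1] at h3
    set η := infDist y S
    have hη : 0 ≤ η := infDist_nonneg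
    have hκ1 : κ * η ≤ 1 / 2 * η := by gcongr; exact min_le_left _ _
    have hκ2 : C * (κ * η) ≤ 1 / 4 * η := by
      calc C * (κ * η) ≤ C * (1 / (4 * C) * η) := by gcongr; exact min_le_right _ _
        _ = 1 / 4 * η := by field_simp
    have h4 : C * dist y1 y2 < C * (2 * (κ * η)) := by gcongr; linarith
    linarith
  · push Not at hne
    obtain ⟨s, hs⟩ := hS
    obtain ⟨i, -⟩ := hF s hs.1
    exact ⟨i, fun x hx hxF => absurd hxF (hne x hx)⟩

lemma flat_inv {Ω : Set E} (hU : IsOpen Ω) (hfc : frontier Ω = frontier (closure Ω))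
    {v : E} {c : ℝ} (hv : v ≠ 0) {y : E} {R : ℝ}
    (hfl : ∀ x ∈ ball y R, x ∈ frontier Ω → ⟪v, x⟫ = c) {d : E} (hd : ⟪v, d⟫ = 0)
    {x : E} (hx : x ∈ ball y R) (hx' : x + d ∈ ball y R) (hxΩ : x ∈ Ω) : x + d ∈ Ω := by
  by_contra hcon
  have h1 : x + d ∈ closure (closure Ω)ᶜ := by
    rw [closure_compl]
    intro h2
    have h3 : x + d ∈ closure Ω := interior_subset h2
    have h4 : x + d ∈ frontier Ω := ⟨h3, by rwa [hU.interior_eq]⟩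
    rw [hfc] at h4
    exact h4.2 h2
  let W : Set E := {w | w ∈ ball y R ∧ w - d ∈ ball y R ∧ w - d ∈ Ω}
  have hW : IsOpen W := by
    have hcont : Continuous fun w : E => w - d := by fun_prop
    exact isOpen_ball.inter ((isOpen_ball.preimage hcont).inter (hU.preimage hcont))
  have hxW : x + d ∈ W := ⟨hx', by simpa using hx, by simpa using hxΩ⟩
  have hne : (W ∩ (closure Ω)ᶜ).Nonempty := mem_closure_iff.1 h1 W hW hxW
  obtain ⟨w, ⟨⟨hw1, hw2, hw3⟩, hw4⟩, hw5⟩ :=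
    (dense_off (fun _ : Unit => v) (fun _ => c) (fun _ => hv)).inter_open_nonempty _
      (hW.inter isClosed_closure.isOpen_compl) hne
  apply hw4
  apply subset_closure
  refine seg_in hU hw3 ?_
  intro z hz hzF
  have hzb : z ∈ ball y R := (convex_ball y R).segment_subset hw2 hw1 hz
  have h5 := hfl z hzb hzF
  apply hw5 ()
  rw [segment_eq_image_lineMap] at hz
  obtain ⟨s, -, rfl⟩ := hz
  rw [AffineMap.lineMap_apply] at h5
  simp only [vsub_eq_sub, vadd_eq_add, sub_sub_cancel, inner_add_right, inner_smul_right, hd,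
    inner_sub_right] at h5
  unfold ell
  linarith

end geom
end KR

/-! ### Part G: from local to global estimates -/
namespace KR
open Filter Topology
open scoped NNReal

section glob
variable {E : Type*} [NormedAddCommGroup E] [NormedSpace ℝ E] [FiniteDimensional ℝ E]
  [MeasurableSpace E] [BorelSpace E] (μ : Measure E) [μ.IsAddHaarMeasure]

set_option linter.unusedSectionVars false in
lemma eta_cmp {S : Set E} {κ : ℝ} (hκ1 : κ ≤ 1 / 2) {x y : E}
    (h : dist x y < κ * infDist y S) :
    infDist y S ≤ 2 * infDist x S ∧ infDist x S ≤ 2 * infDist y S := by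
  have h1 : infDist y S ≤ infDist x S + dist y x := infDist_le_infDist_add_dist
  have h2 : infDist x S ≤ infDist y S + dist x y := infDist_le_infDist_add_dist
  rw [dist_comm y x] at h1
  have h3 : κ * infDist y S ≤ 1 / 2 * infDist y S := by
    have : 0 ≤ infDist y S := infDist_nonneg
    gcongr
  have : 0 ≤ infDist y S := infDist_nonneg
  constructor <;> linarith

lemma globalize {S : Set E} {κ : ℝ} (hκ : 0 < κ) (hκ1 : κ ≤ 1 / 2) (C : ℝ≥0) :
    ∃ C' : ℝ≥0, ∀ F G : E → ℝ≥0∞, Measurable F → Measurable G →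
    (∀ x, infDist x S = 0 → F x = 0) → (∀ x, infDist x S = 0 → G x = 0) →
    (∀ y, 0 < infDist y S → ∫⁻ x in ball y (κ * infDist y S / 2), F x ∂μ ≤
      C * ∫⁻ x in ball y (κ * infDist y S), G x ∂μ) →
    ∫⁻ x, F x ∂μ ≤ C' * ∫⁻ x, G x ∂μ := by
  set d := Module.finrank ℝ E with hd
  set η : E → ℝ := fun x => infDist x S with hη
  have hηc : Continuous η := continuous_infDist_pt S
  have hη0 : ∀ x, 0 ≤ η x := fun x => infDist_nonneg
  set vol := μ (ball (0 : E) 1) with hvol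
  have hvol0 : vol ≠ 0 := (measure_ball_pos μ 0 one_pos).ne'
  have hvolt : vol ≠ ⊤ := measure_ball_lt_top.ne
  let A : ℝ≥0∞ := ENNReal.ofReal ((κ / 4) ^ d * (2⁻¹) ^ d) * vol
  let B : ℝ≥0∞ := ENNReal.ofReal ((2 * κ) ^ d * 2 ^ d) * vol
  have hA0 : A ≠ 0 := mul_ne_zero (by simp; positivity) hvol0
  have hAt : A ≠ ⊤ := ENNReal.mul_ne_top ENNReal.ofReal_ne_top hvolt
  have hBt : B ≠ ⊤ := ENNReal.mul_ne_top ENNReal.ofReal_ne_top hvolt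
  let w : E → ℝ≥0∞ := fun y => ENNReal.ofReal ((η y)⁻¹ ^ d)
  have hw : Measurable w := (hηc.measurable.inv.pow_const d).ennreal_ofReal
  -- kernel
  let ker : ℝ → E → E → ℝ≥0∞ := fun s x y => (ball y (s * η y)).indicator (fun _ => w y) x
  have hker : ∀ s, Measurable (Function.uncurry (ker s)) := by
    intro s
    have hset : MeasurableSet {z : E × E | dist z.1 z.2 < s * η z.2} :=
      (isOpen_lt (by fun_prop) (by fun_prop)).measurableSet
    have : Function.uncurry (ker s) =
        {z : E × E | dist z.1 z.2 < s * η z.2}.indicator (fun z => w z.2) := by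
      ext ⟨x, y⟩
      simp only [Function.uncurry, ker, indicator, mem_ball, mem_ofPred_eq]
    rw [this]
    exact (hw.comp measurable_snd).indicator hset
  have hlow : ∀ x, 0 < η x → A ≤ ∫⁻ y, ker (κ / 2) x y ∂μ := by
    intro x hx
    have hA : A = ∫⁻ y in ball x (κ / 4 * η x), ENNReal.ofReal ((2 * η x)⁻¹ ^ d) ∂μ := by
      rw [setLIntegral_const, Measure.addHaar_ball_of_pos μ x (by positivity), ← mul_assoc,
        ← ENNReal.ofReal_mul (by positivity)]
      rw [← hd]; simp only [A, ← mul_pow]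
      congr 3
      field_simp
    rw [hA, ← lintegral_indicator measurableSet_ball]
    apply lintegral_mono
    intro y
    by_cases hy : y ∈ ball x (κ / 4 * η x)
    · rw [indicator_of_mem hy]
      rw [mem_ball] at hy
      have hy' : dist y x < 1 / 2 * infDist x S :=
        hy.trans_le (by change _ ≤ 1 / 2 * η x; nlinarith)
      obtain ⟨h1, h2⟩ := eta_cmp le_rfl hy'
      change η x ≤ 2 * η y at h1
      change η y ≤ 2 * η x at h2
      have hyp : 0 < η y := by linarith
      have hm : x ∈ ball y (κ / 2 * η y) := by
        rw [mem_ball, dist_comm]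
        refine hy.trans_le ?_
        nlinarith
      simp only [ker]
      rw [indicator_of_mem hm]
      apply ENNReal.ofReal_le_ofReal
      gcongr
    · rw [indicator_of_notMem hy]; exact zero_le
  have hup : ∀ x, 0 < η x → ∫⁻ y, ker κ x y ∂μ ≤ B := by
    intro x hx
    have hB : B = ∫⁻ y in ball x (2 * κ * η x), ENNReal.ofReal ((η x / 2)⁻¹ ^ d) ∂μ := by
      rw [setLIntegral_const, Measure.addHaar_ball_of_pos μ x (by positivity), ← mul_assoc,
        ← ENNReal.ofReal_mul (by positivity)]
      rw [← hd]; simp only [B, ← mul_pow]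
      congr 3
      field_simp
    rw [hB, ← lintegral_indicator measurableSet_ball]
    apply lintegral_mono
    intro y
    simp only [ker]
    by_cases hy : x ∈ ball y (κ * η y)
    · rw [indicator_of_mem hy]
      rw [mem_ball] at hy
      obtain ⟨h1, h2⟩ := eta_cmp hκ1 hy
      change η y ≤ 2 * η x at h1
      change η x ≤ 2 * η y at h2
      have hm : y ∈ ball x (2 * κ * η x) := by
        rw [mem_ball, dist_comm]
        refine hy.trans_le ?_
        nlinarith
      rw [indicator_of_mem hm]
      apply ENNReal.ofReal_le_ofReal
      have : 0 < η y := by linarith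
      gcongr
      linarith
    · rw [indicator_of_notMem hy]; exact zero_le
  refine ⟨(A⁻¹ * (C * B)).toNNReal, ?_⟩
  intro F G hF hG hF0 hG0 hloc
  have hC' : (((A⁻¹ * (C * B)).toNNReal : ℝ≥0) : ℝ≥0∞) = A⁻¹ * (C * B) :=
    ENNReal.coe_toNNReal (ENNReal.mul_ne_top (ENNReal.inv_ne_top.2 hA0)
      (ENNReal.mul_ne_top ENNReal.coe_ne_top hBt))
  rw [hC']
  have swap : ∀ (s : ℝ) (F : E → ℝ≥0∞), Measurable F →
      ∫⁻ x, F x * ∫⁻ y, ker s x y ∂μ ∂μ = ∫⁻ y, w y * ∫⁻ x in ball y (s * η y), F x ∂μ ∂μ := by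
    intro s F hF
    have e1 : ∀ x, F x * ∫⁻ y, ker s x y ∂μ = ∫⁻ y, F x * ker s x y ∂μ := by
      intro x
      exact (lintegral_const_mul _ ((hker s).comp measurable_prodMk_left)).symm
    simp_rw [e1]
    rw [lintegral_lintegral_swap]
    · congr 1
      ext y
      rw [← lintegral_const_mul _ hF, ← lintegral_indicator measurableSet_ball]
      congr 1
      ext x
      simp only [ker, indicator]
      split_ifs
      · rw [mul_comm]
      · rw [mul_zero]
    · exact ((hF.comp measurable_fst).mul (hker s)).aemeasurable
  have main : A * ∫⁻ x, F x ∂μ ≤ C * (B * ∫⁻ x, G x ∂μ) := by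
    calc A * ∫⁻ x, F x ∂μ = ∫⁻ x, F x * A ∂μ := by
          rw [lintegral_mul_const _ hF, mul_comm]
      _ ≤ ∫⁻ x, F x * ∫⁻ y, ker (κ / 2) x y ∂μ ∂μ := by
          apply lintegral_mono
          intro x
          rcases (hη0 x).eq_or_lt with h | h
          · beta_reduce
            rw [hF0 x h.symm]; simp
          · exact mul_le_mul_right (hlow x h) _
      _ = ∫⁻ y, w y * ∫⁻ x in ball y (κ / 2 * η y), F x ∂μ ∂μ := swap _ F hF
      _ ≤ ∫⁻ y, C * (w y * ∫⁻ x in ball y (κ * η y), G x ∂μ) ∂μ := by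
          apply lintegral_mono
          intro y
          beta_reduce
          rcases (hη0 y).eq_or_lt with h | h
          · rw [← h]; simp
          · have := hloc y h
            rw [show κ / 2 * η y = κ * infDist y S / 2 by ring, mul_left_comm]
            exact mul_le_mul_right this _
      _ = C * ∫⁻ y, w y * ∫⁻ x in ball y (κ * η y), G x ∂μ ∂μ :=
          lintegral_const_mul' _ _ ENNReal.coe_ne_top
      _ = C * ∫⁻ x, G x * ∫⁻ y, ker κ x y ∂μ ∂μ := by rw [swap _ G hG]
      _ ≤ C * ∫⁻ x, G x * B ∂μ := by
          refine mul_le_mul_right (lintegral_mono fun x => ?_) _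
          beta_reduce
          rcases (hη0 x).eq_or_lt with h | h
          · rw [hG0 x h.symm]; simp
          · exact mul_le_mul_right (hup x h) _
      _ = C * (B * ∫⁻ x, G x ∂μ) := by rw [lintegral_mul_const _ hG, mul_comm B]
  calc ∫⁻ x, F x ∂μ = A⁻¹ * (A * ∫⁻ x, F x ∂μ) := by
        rw [← mul_assoc, ENNReal.inv_mul_cancel hA0 hAt, one_mul]
    _ ≤ A⁻¹ * (C * (B * ∫⁻ x, G x ∂μ)) := by gcongr
    _ = _ := by ring

end glob
end KR

/-! ### Part H: change of frame and the local estimate in coordinates -/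
namespace KR
open Filter Topology
open scoped ContDiff NNReal

section frame
set_option linter.unusedSectionVars false
variable {E : Type*} [NormedAddCommGroup E] [NormedSpace ℝ E] [FiniteDimensional ℝ E]
  [MeasurableSpace E] [BorelSpace E] (μ : Measure E) [μ.IsAddHaarMeasure]

lemma I2_const_mul (A : Set E) (k : ℝ) (f : E → ℝ) :
    I2 μ A (fun x => k * f x) = ENNReal.ofReal (k ^ 2) * I2 μ A f := by
  unfold I2
  rw [← lintegral_const_mul' _ _ ENNReal.ofReal_ne_top]
  congr 1
  ext x
  rw [mul_pow, ENNReal.ofReal_mul (sq_nonneg _)]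

lemma I2_frame {G : Set E} (hG : IsOpen G) {u : E → ℝ} (hu : ContDiffOn ℝ ∞ u G)
    {ι' ι : Type*} [Fintype ι] (e : ι' → E) (o : ι → E) (c : ι' → ι → ℝ) (K : ℝ)
    (hK : ∀ k j, |c k j| ≤ K) (he : ∀ k, e k = ∑ j, c k j • o j) (M : ℝ≥0∞) (L : List ι') :
    ∀ (J' : List ι), (∀ J : List ι, J.length = L.length + J'.length →
      I2 μ G (dl (J.map o) u) ≤ M) →
    I2 μ G (dl (L.map e ++ J'.map o) u) ≤
      ((Fintype.card ι : ℝ≥0∞) ^ 2 * ENNReal.ofReal (K ^ 2)) ^ L.length * M := by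
  induction L with
  | nil =>
    intro J' h
    simpa using h J' (by simp)
  | cons k L ih =>
    intro J' h
    have hd := fun L => dl_contDiffOn hG hu L
    set D := L.map e ++ J'.map o with hD
    have e1 : dl ((k :: L).map e ++ J'.map o) u =
        fun x => ∑ j, c k j * dl (o j :: D) u x := by
      ext x
      rw [List.map_cons, List.cons_append, dl_cons, he k]
      beta_reduce
      rw [map_sum]
      simp only [map_smul, smul_eq_mul, dl_cons, hD]
    rw [e1]
    refine (I2_sum_le μ hG.measurableSet Finset.univ
      (fun j _ => continuousOn_const.mul (hd _).continuousOn)).trans ?_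
    set N : ℝ≥0∞ := (Fintype.card ι : ℝ≥0∞) ^ 2 * ENNReal.ofReal (K ^ 2) with hN
    have hj : ∀ j, I2 μ G (fun x => c k j * dl (o j :: D) u x) ≤
        ENNReal.ofReal (K ^ 2) * (N ^ L.length * M) := by
      intro j
      rw [I2_const_mul]
      have hp : (o j :: D).Perm (L.map e ++ (j :: J').map o) := by
        rw [hD, List.map_cons]
        exact List.perm_middle.symm
      rw [I2_congr μ hG.measurableSet (dl_perm hG hu hp)]
      refine mul_le_mul' (ENNReal.ofReal_le_ofReal ?_) (ih (j :: J') ?_)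
      · exact sq_le_sq' (abs_le.1 (hK k j)).1 (abs_le.1 (hK k j)).2
      · intro J hJ
        apply h J
        simp only [List.length_cons] at hJ ⊢
        omega
    calc _ ≤ (Fintype.card ι : ℝ≥0∞) * ∑ j : ι, ENNReal.ofReal (K ^ 2) * (N ^ L.length * M) := by
          rw [Finset.card_univ]
          gcongr with j
          exact hj j
      _ = N ^ (k :: L).length * M := by
          rw [Finset.sum_const, Finset.card_univ, nsmul_eq_mul, List.length_cons, pow_succ]
          change _ = N ^ L.length * N * M
          generalize N ^ L.length = P
          rw [hN]
          ring

lemma I2_frame' {G : Set E} (hG : IsOpen G) {u : E → ℝ} (hu : ContDiffOn ℝ ∞ u G)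
    {ι' ι : Type*} [Fintype ι] (e : ι' → E) (o : ι → E) (c : ι' → ι → ℝ) (K : ℝ)
    (hK : ∀ k j, |c k j| ≤ K) (he : ∀ k, e k = ∑ j, c k j • o j) (M : ℝ≥0∞) (L : List ι')
    (h : ∀ J : List ι, J.length = L.length → I2 μ G (dl (J.map o) u) ≤ M) :
    I2 μ G (dl (L.map e) u) ≤
      ((Fintype.card ι : ℝ≥0∞) ^ 2 * ENNReal.ofReal (K ^ 2)) ^ L.length * M := by
  have := I2_frame μ hG hu e o c K hK he M L [] (by simpa using h)
  simpa using this

end frame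

section coord
variable {n : ℕ}

lemma derivAlong_eq (L : List (Fin n)) (u : EuclideanSpace ℝ (Fin n) → ℝ) :
    derivAlong L u = dl (L.map fun i => EuclideanSpace.single i (1 : ℝ)) u := by
  induction L with
  | nil => rfl
  | cons i L ih => rw [List.map_cons, dl_cons, derivAlong, ih]

lemma dl_two {E : Type*} [NormedAddCommGroup E] [NormedSpace ℝ E] {G : Set E} (hG : IsOpen G)
    {u : E → ℝ} (hu : ContDiffOn ℝ ∞ u G) (a b : E) {x : E} (hx : x ∈ G) :
    dl [a, b] u x = iteratedFDeriv ℝ 2 u x ![a, b] := by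
  have hux : ContDiffAt ℝ ∞ u x := hu.contDiffAt (hG.mem_nhds hx)
  have hd : DifferentiableAt ℝ (fderiv ℝ u) x :=
    (hux.fderiv_right (m := 1) (by norm_cast)).differentiableAt (by simp)
  simp only [dl_cons, dl_nil]
  rw [fderiv_clm_apply hd (differentiableAt_const b), iteratedFDeriv_two_apply]
  simp

lemma Lop_eq_laplace {G : Set (EuclideanSpace ℝ (Fin n))} (hG : IsOpen G)
    {u : EuclideanSpace ℝ (Fin n) → ℝ} (hu : ContDiffOn ℝ ∞ u G)
    (o : OrthonormalBasis (Fin n) ℝ (EuclideanSpace ℝ (Fin n))) (R : ℝ) :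
    EqOn (Lop (fun i => R • o i) u) (fun x => R ^ 2 * laplaceOp u x) G := by
  intro x hx
  have h1 := congrFun (InnerProductSpace.laplacian_eq_iteratedFDeriv_orthonormalBasis u o) x
  have h2 := congrFun (InnerProductSpace.laplacian_eq_iteratedFDeriv_orthonormalBasis u
    (EuclideanSpace.basisFun (Fin n) ℝ)) x
  have h3 := h1.symm.trans h2
  have h4 : laplaceOp u x = ∑ i, iteratedFDeriv ℝ 2 u x
      ![EuclideanSpace.basisFun (Fin n) ℝ i, EuclideanSpace.basisFun (Fin n) ℝ i] := by
    unfold laplaceOp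
    refine Finset.sum_congr rfl fun i _ => ?_
    rw [derivAlong_eq, ← dl_two hG hu _ _ hx]
    simp
  beta_reduce
  rw [h4, ← h3, Finset.mul_sum]
  unfold Lop
  refine Finset.sum_congr rfl fun i _ => ?_
  rw [dl_two hG hu _ _ hx, iteratedFDeriv_two_apply, iteratedFDeriv_two_apply]
  simp
  ring

lemma exists_frame (hn : 0 < n) {ν : EuclideanSpace ℝ (Fin n)} (hν : ν ≠ 0) :
    ∃ o : OrthonormalBasis (Fin n) ℝ (EuclideanSpace ℝ (Fin n)),
      ∀ i, i ≠ (⟨0, hn⟩ : Fin n) → ⟪ν, o i⟫ = 0 := by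
  have ho : Orthonormal ℝ (({(⟨0, hn⟩ : Fin n)} : Set (Fin n)).domRestrict
      (fun _ : Fin n => ‖ν‖⁻¹ • ν)) := by
    constructor
    · intro i
      change ‖‖ν‖⁻¹ • ν‖ = 1
      rw [norm_smul, norm_inv, norm_norm, inv_mul_cancel₀ (norm_ne_zero_iff.2 hν)]
    · intro i j hij
      exact absurd (Subsingleton.elim i j) hij
  obtain ⟨o, ho'⟩ := ho.exists_orthonormalBasis_extension_of_card_eq (by simp)
  refine ⟨o, fun i hi => ?_⟩
  have h1 := ho' ⟨0, hn⟩ rfl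
  have h2 : ⟪o ⟨0, hn⟩, o i⟫ = 0 := o.orthonormal.2 hi.symm
  rw [h1, inner_smul_left] at h2
  have : (‖ν‖⁻¹ : ℝ) ≠ 0 := inv_ne_zero (norm_ne_zero_iff.2 hν)
  simpa [this] using h2

lemma local_est (hn : 0 < n) (m : ℕ) : ∃ C : ℝ≥0,
    ∀ (Ω : Set (EuclideanSpace ℝ (Fin n))), IsOpen Ω → frontier Ω = frontier (closure Ω) →
    ∀ (ν : EuclideanSpace ℝ (Fin n)) (c : ℝ), ν ≠ 0 →
    ∀ (y : EuclideanSpace ℝ (Fin n)) (R : ℝ), 0 < R →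
    (∀ x ∈ ball y R, x ∈ frontier Ω → ⟪ν, x⟫ = c) →
    ∀ (u : EuclideanSpace ℝ (Fin n) → ℝ), ContDiffOn ℝ ∞ u Ω → ContinuousOn u (closure Ω) →
    (∀ x ∈ frontier Ω, u x = 0) →
    ∀ M : ℝ≥0∞, I2 volume (Ω ∩ ball y R) u ≤ M →
    (∀ L : List (Fin n), L.length ≤ m - 1 → ENNReal.ofReal (R ^ 2) ^ (L.length + 2) *
      I2 volume (Ω ∩ ball y R) (derivAlong L (laplaceOp u)) ≤ M) →
    ∀ L : List (Fin n), L.length ≤ m + 1 → ENNReal.ofReal (R ^ 2) ^ L.length *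
      I2 volume (Ω ∩ ball y (R / 2)) (derivAlong L u) ≤ C * M := by
  obtain ⟨C, hC⟩ := allD (volume : Measure (EuclideanSpace ℝ (Fin n))) (Fin n) ⟨0, hn⟩ m
  refine ⟨(n ^ 2) ^ (m + 1) * (C * (n ^ 2) ^ m), ?_⟩
  intro Ω hΩ hfc ν c hν y R hR hfl u hu huc hu0 M hM1 hM2
  obtain ⟨o, ho⟩ := exists_frame hn hν
  set b : Fin n → EuclideanSpace ℝ (Fin n) := fun i => R • o i with hb
  set e : Fin n → EuclideanSpace ℝ (Fin n) := fun i => EuclideanSpace.single i (1 : ℝ) with he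
  set a := ENNReal.ofReal (R ^ 2) with ha
  have ha0 : a ≠ 0 := by simp [ha]; positivity
  have hat : a ≠ ⊤ := ENNReal.ofReal_ne_top
  have hainv : ENNReal.ofReal ((R⁻¹) ^ 2) = a⁻¹ := by
    rw [ha, ← ENNReal.ofReal_inv_of_pos (by positivity), inv_pow]
  have hn1 : (1 : ℝ≥0∞) ≤ (n : ℝ≥0∞) ^ 2 := by
    have : (1 : ℝ≥0∞) ≤ n := by exact_mod_cast hn
    exact one_le_pow₀ this
  have hin : ∀ x z : EuclideanSpace ℝ (Fin n), ‖x‖ = 1 → ‖z‖ = 1 → |⟪x, z⟫| ≤ 1 := by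
    intro x z hx hz
    have := abs_real_inner_le_norm x z
    rwa [hx, hz, one_mul] at this
  have hen : ∀ i, ‖e i‖ = 1 := fun i => by simp [he]
  have hon : ∀ i, ‖o i‖ = 1 := fun i => o.orthonormal.1 i
  have hLoc : Loc (⟨0, hn⟩ : Fin n) Ω y R b := by
    refine ⟨hΩ, hR, ?_, ?_⟩
    · intro i
      simp only [hb]
      rw [norm_smul, hon, mul_one, Real.norm_eq_abs, abs_of_pos hR]
    · intro i hi x hx t hxt hxΩ
      refine flat_inv hΩ hfc hν hfl ?_ hx hxt hxΩ
      simp only [hb]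
      rw [inner_smul_right, inner_smul_right, ho i hi]; simp
  set U := Ω.indicator u with hU
  have hUu : EqOn U u Ω := fun x hx => indicator_of_mem hx u
  have hUsm : ContDiffOn ℝ ∞ U Ω := hu.congr hUu
  have hW : IsW Ω (ball y (1 * R)) U := by
    refine ⟨(continuous_indicator hu0 huc).continuousOn, ?_, hUsm.mono inter_subset_left⟩
    intro x _ hx
    exact indicator_of_notMem hx u
  have hG1 := hLoc.isOpen 1
  have hsub1 : Ω ∩ ball y (1 * R) ⊆ Ω := inter_subset_left
  have hu1 := hu.mono hsub1
  have hG2 := hLoc.isOpen (1 / 2)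
  have hsub2 : Ω ∩ ball y (1 / 2 * R) ⊆ Ω := inter_subset_left
  have hu2 := hu.mono hsub2
  have hball : ball y R = ball y (1 * R) := by rw [one_mul]
  have hball2 : ball y (R / 2) = ball y (1 / 2 * R) := by congr 1; ring
  rw [hball] at hM1 hM2
  rw [hball2]
  have hlap : ContDiffOn ℝ ∞ (laplaceOp u) (Ω ∩ ball y (1 * R)) := by
    unfold laplaceOp
    refine ContDiffOn.sum fun j _ => ?_
    rw [derivAlong_eq]
    exact dl_contDiffOn hG1 hu1 _
  have key := hC Ω y R b hLoc U ((((n : ℝ≥0∞) ^ 2) ^ m) * M) hW ?_ ?_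
  · intro L hL
    rw [derivAlong_eq]
    have hfr := I2_frame' volume hG2 hu2 e b (fun k j => R⁻¹ * ⟪o j, e k⟫) R⁻¹ ?_ ?_
      (C * ((((n : ℝ≥0∞) ^ 2) ^ m) * M)) L ?_
    · rw [Fintype.card_fin, hainv] at hfr
      calc _ ≤ a ^ L.length * (((n : ℝ≥0∞) ^ 2 * a⁻¹) ^ L.length *
            (C * ((((n : ℝ≥0∞) ^ 2) ^ m) * M))) := by gcongr
        _ = (a * a⁻¹) ^ L.length * (((n : ℝ≥0∞) ^ 2) ^ L.length *
            (C * ((((n : ℝ≥0∞) ^ 2) ^ m) * M))) := by rw [mul_pow, mul_pow]; ring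
        _ = (((n : ℝ≥0∞) ^ 2) ^ L.length * (C * ((((n : ℝ≥0∞) ^ 2) ^ m) * M))) := by
            rw [ENNReal.mul_inv_cancel ha0 hat, one_pow, one_mul]
        _ ≤ (((n : ℝ≥0∞) ^ 2) ^ (m + 1) * (C * ((((n : ℝ≥0∞) ^ 2) ^ m) * M))) := by
            gcongr
        _ = _ := by push_cast; ring
    · intro k j
      rw [abs_mul, abs_of_pos (inv_pos.2 hR)]
      exact mul_le_of_le_one_right (inv_pos.2 hR).le (hin _ _ (hon j) (hen k))
    · intro k
      conv_lhs => rw [← o.sum_repr' (e k)]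
      refine Finset.sum_congr rfl fun j _ => ?_
      simp only [hb, smul_smul]
      congr 1
      field_simp
    · intro J hJ
      rw [← I2_congr volume hG2.measurableSet (dl_congr hG2 (hUu.mono hsub2) (J.map b))]
      exact key J (by omega)
  · rw [I2_congr volume hG1.measurableSet (hUu.mono hsub1)]
    refine hM1.trans ?_
    conv_lhs => rw [← one_mul M]
    gcongr
    exact one_le_pow₀ hn1
  · intro L hL
    have e1 : EqOn (Lop b U) (fun x => R ^ 2 * laplaceOp u x) (Ω ∩ ball y (1 * R)) := by
      refine EqOn.trans ?_ (Lop_eq_laplace hG1 hu1 o R)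
      intro x hx
      unfold Lop
      exact Finset.sum_congr rfl fun i _ => dl_congr hG1 (hUu.mono hsub1) _ hx
    have e2 := (dl_congr hG1 e1 (L.map b)).trans (dl_const_mul hG1 hlap (R ^ 2) (L.map b))
    rw [I2_congr volume hG1.measurableSet e2, I2_const_mul]
    have hfr := I2_frame' volume hG1 hlap b e (fun k j => R * ⟪e j, o k⟫) R ?_ ?_
      ((a ^ (L.length + 2))⁻¹ * M) L ?_
    · rw [Fintype.card_fin, ← ha] at hfr
      have ha2 : ENNReal.ofReal ((R ^ 2) ^ 2) = a ^ 2 := by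
        rw [ha, ENNReal.ofReal_pow (by positivity)]
      rw [ha2]
      calc _ ≤ a ^ 2 * (((n : ℝ≥0∞) ^ 2 * a) ^ L.length * ((a ^ (L.length + 2))⁻¹ * M)) := by
            gcongr
        _ = (a ^ (L.length + 2) * (a ^ (L.length + 2))⁻¹) * (((n : ℝ≥0∞) ^ 2) ^ L.length * M) := by
            rw [mul_pow, pow_add]; ring
        _ = ((n : ℝ≥0∞) ^ 2) ^ L.length * M := by
            rw [ENNReal.mul_inv_cancel (pow_ne_zero _ ha0) (ENNReal.pow_ne_top hat), one_mul]
        _ ≤ _ := by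
            gcongr
            omega
    · intro k j
      rw [abs_mul, abs_of_pos hR]
      exact mul_le_of_le_one_right hR.le (hin _ _ (hen j) (hon k))
    · intro k
      simp only [hb]
      conv_lhs => rw [← (EuclideanSpace.basisFun (Fin n) ℝ).sum_repr' (o k), Finset.smul_sum]
      refine Finset.sum_congr rfl fun j _ => ?_
      simp only [smul_smul, he, EuclideanSpace.basisFun_apply]
    · intro J hJ
      have h3 := hM2 J (by omega)
      rw [derivAlong_eq] at h3
      rw [hJ] at h3
      rw [mul_comm _ M, ← div_eq_mul_inv, ENNReal.le_div_iff_mul_le, mul_comm]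
      · exact h3
      · left; exact pow_ne_zero _ ha0
      · left; exact ENNReal.pow_ne_top hat

end coord
end KR

/-! ### Part I: multi-indices and the weighted estimate -/
namespace KR
open Filter Topology
open scoped ContDiff NNReal

section final
variable {n : ℕ}

lemma mem_mi {m : ℕ} {β : Fin n → ℕ} : β ∈ multiIndicesLE n m ↔ ∑ i, β i ≤ m := by
  unfold multiIndicesLE
  simp only [Finset.mem_image, Finset.mem_filter, Finset.mem_univ, true_and]
  constructor
  · rintro ⟨γ, h, rfl⟩
    exact h
  · intro h
    have hi : ∀ i, β i < m + 1 := fun i =>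
      Nat.lt_succ_of_le ((Finset.single_le_sum (f := β) (fun _ _ => Nat.zero_le _)
        (Finset.mem_univ i)).trans h)
    exact ⟨fun i => ⟨β i, hi i⟩, h, rfl⟩

/-- The list of directions attached to a multi-index. -/
def Lb (β : Fin n → ℕ) : List (Fin n) :=
  (List.finRange n).flatMap fun i => List.replicate (β i) i

lemma Lb_length (β : Fin n → ℕ) : (Lb β).length = ∑ i, β i := by
  unfold Lb
  rw [List.length_flatMap, Fin.sum_univ_def]
  simp

lemma Lb_perm (L : List (Fin n)) : L.Perm (Lb fun i => L.count i) := by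
  rw [List.perm_iff_count]
  intro a
  unfold Lb
  rw [List.count_flatMap, ← Fin.sum_univ_def]
  simp [List.count_replicate]

lemma sum_count (L : List (Fin n)) : ∑ i, L.count i = L.length := by
  rw [(Lb_perm L).length_eq, Lb_length]

lemma derivAlong_eqOn {G : Set (EuclideanSpace ℝ (Fin n))} (hG : IsOpen G)
    {u : EuclideanSpace ℝ (Fin n) → ℝ} (hu : ContDiffOn ℝ ∞ u G) (L : List (Fin n)) :
    EqOn (derivAlong L u) (pderivMulti (fun i => L.count i) u) G := by
  change EqOn (derivAlong L u) (derivAlong (Lb fun i => L.count i) u) G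
  rw [derivAlong_eq, derivAlong_eq]
  exact dl_perm hG hu ((Lb_perm L).map _)

/-- One term of the squared norm. -/
def KT (S : Set (EuclideanSpace ℝ (Fin n))) (a : ℝ) (w : EuclideanSpace ℝ (Fin n) → ℝ)
    (β : Fin n → ℕ) (x : EuclideanSpace ℝ (Fin n)) : ℝ≥0∞ :=
  ENNReal.ofReal (infDist x S ^ (2 * (((∑ i, β i : ℕ) : ℝ) - a)) * pderivMulti β w x ^ 2)

/-- The density of the squared norm. -/
def KF (Ω S : Set (EuclideanSpace ℝ (Fin n))) (m : ℕ) (a : ℝ)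
    (w : EuclideanSpace ℝ (Fin n) → ℝ) (x : EuclideanSpace ℝ (Fin n)) : ℝ≥0∞ :=
  ∑ β ∈ multiIndicesLE n m, Ω.indicator (KT S a w β) x

variable {Ω S : Set (EuclideanSpace ℝ (Fin n))} {w : EuclideanSpace ℝ (Fin n) → ℝ}

lemma KT_meas (hΩ : IsOpen Ω) (hη : ∀ x ∈ Ω, 0 < infDist x S) (hw : ContDiffOn ℝ ∞ w Ω)
    (a : ℝ) (β : Fin n → ℕ) : Measurable (Ω.indicator (KT S a w β)) := by
  refine measurable_indicator_of_continuousOn hΩ.measurableSet ?_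
  unfold KT
  refine ENNReal.continuous_ofReal.comp_continuousOn ?_
  refine ContinuousOn.mul ?_ ?_
  · exact (continuous_infDist_pt S).continuousOn.rpow_const fun x hx => Or.inl (hη x hx).ne'
  · unfold pderivMulti
    rw [derivAlong_eq]
    exact (dl_contDiffOn hΩ hw _).continuousOn.pow 2

lemma KF_meas (hΩ : IsOpen Ω) (hη : ∀ x ∈ Ω, 0 < infDist x S) (hw : ContDiffOn ℝ ∞ w Ω)
    (a : ℝ) (m : ℕ) : Measurable (KF Ω S m a w) := by
  unfold KF
  exact Finset.measurable_fun_sum _ fun β _ => KT_meas hΩ hη hw a β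

lemma KF_zero (hη : ∀ x ∈ Ω, 0 < infDist x S) (a : ℝ) (m : ℕ) (x : EuclideanSpace ℝ (Fin n))
    (hx : infDist x S = 0) : KF Ω S m a w x = 0 := by
  unfold KF
  refine Finset.sum_eq_zero fun β _ => indicator_of_notMem (fun h => ?_) _
  exact (hη x h).ne' hx

lemma setKF (hΩ : IsOpen Ω) (hη : ∀ x ∈ Ω, 0 < infDist x S) (hw : ContDiffOn ℝ ∞ w Ω)
    (a : ℝ) (m : ℕ) (A : Set (EuclideanSpace ℝ (Fin n))) :
    ∫⁻ x in A, KF Ω S m a w x =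
      ∑ β ∈ multiIndicesLE n m, ∫⁻ x in Ω ∩ A, KT S a w β x := by
  unfold KF
  rw [lintegral_finsetSum _ fun β _ => KT_meas hΩ hη hw a β]
  exact Finset.sum_congr rfl fun β _ => setLIntegral_indicator hΩ.measurableSet _

lemma KnormSq_eq (hΩ : IsOpen Ω) (hη : ∀ x ∈ Ω, 0 < infDist x S) (hw : ContDiffOn ℝ ∞ w Ω)
    (a : ℝ) (m : ℕ) : KnormSq Ω S m a w = ∫⁻ x, KF Ω S m a w x := by
  rw [← setLIntegral_univ, setKF hΩ hη hw, inter_univ]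
  rfl

/-- Weight comparisons. -/
lemma wt_aux {κ h η : ℝ} (hκ : 0 < κ) (hκ1 : κ ≤ 1 / 2) (hh : 0 < h) (h1 : h ≤ 2 * η)
    (h2 : η ≤ 2 * h) (m k : ℕ) (hk : k ≤ m) :
    (κ * h) ^ 2 * η ^ (2 * ((k : ℝ) - 1)) ≤ (4 / κ ^ 2) ^ m * ((κ * h) ^ 2) ^ k := by
  have hη : 0 < η := by linarith
  have e : η ^ (2 * ((k : ℝ) - 1)) = (η ^ 2) ^ k * (η ^ 2)⁻¹ := by
    rw [show 2 * ((k : ℝ) - 1) = ((2 * k : ℕ) : ℝ) - ((2 : ℕ) : ℝ) by push_cast; ring,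
      Real.rpow_sub hη, Real.rpow_natCast, Real.rpow_natCast, pow_mul, div_eq_mul_inv]
  rw [e]
  have a1 : η ^ 2 ≤ 4 / κ ^ 2 * (κ * h) ^ 2 := by
    have : 4 / κ ^ 2 * (κ * h) ^ 2 = 4 * h ^ 2 := by field_simp
    rw [this]; nlinarith
  have a2 : (κ * h) ^ 2 * (η ^ 2)⁻¹ ≤ 1 := by
    rw [← div_eq_mul_inv, div_le_one (by positivity)]
    have : κ * h ≤ η := by nlinarith
    exact pow_le_pow_left₀ (by positivity) this 2
  have a3 : (1 : ℝ) ≤ 4 / κ ^ 2 := by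
    rw [le_div_iff₀ (by positivity)]; nlinarith
  calc (κ * h) ^ 2 * ((η ^ 2) ^ k * (η ^ 2)⁻¹) = (η ^ 2) ^ k * ((κ * h) ^ 2 * (η ^ 2)⁻¹) := by ring
    _ ≤ (η ^ 2) ^ k * 1 := by gcongr
    _ = (η ^ 2) ^ k := mul_one _
    _ ≤ (4 / κ ^ 2 * (κ * h) ^ 2) ^ k := by gcongr
    _ = (4 / κ ^ 2) ^ k * ((κ * h) ^ 2) ^ k := mul_pow _ _ _
    _ ≤ _ := by gcongr

lemma wt_aux2 {κ h η : ℝ} (hκ : 0 < κ) (hκ1 : κ ≤ 1 / 2) (hh : 0 < h) (h1 : h ≤ 2 * η)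
    (k : ℕ) : ((κ * h) ^ 2) ^ (k + 2) ≤ (κ * h) ^ 2 * η ^ (2 * ((k : ℝ) - (-1))) := by
  have hη : 0 < η := by linarith
  have e : η ^ (2 * ((k : ℝ) - (-1))) = (η ^ 2) ^ (k + 1) := by
    rw [show 2 * ((k : ℝ) - (-1)) = ((2 * (k + 1) : ℕ) : ℝ) by push_cast; ring,
      Real.rpow_natCast, pow_mul]
  rw [e, show k + 2 = (k + 1) + 1 from rfl, pow_succ ((κ * h) ^ 2) (k + 1), mul_comm]
  have : κ * h ≤ η := by nlinarith
  gcongr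

lemma wt_aux3 {κ h η : ℝ} (hκ : 0 < κ) (hκ1 : κ ≤ 1 / 2) (hh : 0 < h) (h1 : h ≤ 2 * η)
    (h2 : η ≤ 2 * h) (m : ℕ) (hm : 1 ≤ m) :
    1 ≤ (4 / κ ^ 2) ^ m * ((κ * h) ^ 2 * η ^ (2 * (((0 : ℕ) : ℝ) - 1))) := by
  have hη : 0 < η := by linarith
  have e : η ^ (2 * (((0 : ℕ) : ℝ) - 1)) = (η ^ 2)⁻¹ := by
    rw [show 2 * (((0 : ℕ) : ℝ) - 1) = -((2 : ℕ) : ℝ) by push_cast; ring,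
      Real.rpow_neg hη.le, Real.rpow_natCast]
  rw [e]
  have a1 : η ^ 2 ≤ 4 / κ ^ 2 * (κ * h) ^ 2 := by
    have : 4 / κ ^ 2 * (κ * h) ^ 2 = 4 * h ^ 2 := by field_simp
    rw [this]; nlinarith
  have a3 : (1 : ℝ) ≤ 4 / κ ^ 2 := by
    rw [le_div_iff₀ (by positivity)]; nlinarith
  have a4 : 4 / κ ^ 2 ≤ (4 / κ ^ 2) ^ m := le_self_pow₀ a3 (by omega)
  calc (1 : ℝ) = η ^ 2 * (η ^ 2)⁻¹ := (mul_inv_cancel₀ (by positivity)).symm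
    _ ≤ (4 / κ ^ 2 * (κ * h) ^ 2) * (η ^ 2)⁻¹ := by gcongr
    _ = 4 / κ ^ 2 * ((κ * h) ^ 2 * (η ^ 2)⁻¹) := by ring
    _ ≤ _ := by gcongr

lemma main_sq (hn : 0 < n) (hΩ : IsOpen Ω) (hfc : frontier Ω = frontier (closure Ω))
    (hη : ∀ x ∈ Ω, 0 < infDist x S) {κ : ℝ} (hκ : 0 < κ) (hκ1 : κ ≤ 1 / 2)
    (hflat : ∀ y, ∃ (ν : EuclideanSpace ℝ (Fin n)) (c : ℝ), ν ≠ 0 ∧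
      ∀ x ∈ ball y (κ * infDist y S), x ∈ frontier Ω → ⟪ν, x⟫ = c) (m : ℕ) :
    ∃ C : ℝ≥0, ∀ u : EuclideanSpace ℝ (Fin n) → ℝ, ContDiffOn ℝ ∞ u Ω →
      ContinuousOn u (closure Ω) → (∀ x ∈ frontier Ω, u x = 0) →
      KnormSq Ω S (m + 1) 1 u ≤
        C * (KnormSq Ω S (m - 1) (-1) (laplaceOp u) + KnormSq Ω S 0 1 u) := by
  obtain ⟨C, hC⟩ := local_est hn m
  set A : ℝ := (4 / κ ^ 2) ^ (m + 1) with hA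
  have hA1 : 1 ≤ A := by
    apply one_le_pow₀
    rw [le_div_iff₀ (by positivity)]; nlinarith
  set A' : ℝ≥0 := A.toNNReal with hA'
  have hAA : ENNReal.ofReal A = A' := rfl
  have hA'1 : (1 : ℝ≥0∞) ≤ A' := by rw [← hAA]; simpa using hA1
  set N : ℝ≥0 := ((multiIndicesLE n (m + 1)).card : ℝ≥0) with hN
  obtain ⟨C', hC'⟩ := globalize (S := S) (volume : Measure (EuclideanSpace ℝ (Fin n))) hκ hκ1
    (N * (A' * (C * A')))
  refine ⟨C', fun u hu huc hu0 => ?_⟩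
  have hlap : ContDiffOn ℝ ∞ (laplaceOp u) Ω := by
    unfold laplaceOp
    refine ContDiffOn.sum fun j _ => ?_
    rw [derivAlong_eq]
    exact dl_contDiffOn hΩ hu _
  rw [KnormSq_eq hΩ hη hu, KnormSq_eq hΩ hη hu, KnormSq_eq hΩ hη hlap,
    ← lintegral_add_left (KF_meas hΩ hη hlap _ _)]
  refine hC' _ _ (KF_meas hΩ hη hu _ _) ((KF_meas hΩ hη hlap _ _).add (KF_meas hΩ hη hu _ _))
    (fun x hx => KF_zero hη _ _ x hx)
    (fun x hx => by simp only [KF_zero hη _ _ x hx, add_zero]) ?_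
  intro y hy
  set h := infDist y S with hh
  set R := κ * h with hR
  have hR0 : 0 < R := mul_pos hκ hy
  obtain ⟨ν, c, hν, hfl⟩ := hflat y
  set a := ENNReal.ofReal (R ^ 2) with ha
  have ha0 : a ≠ 0 := by simp [ha]; positivity
  have hat : a ≠ ⊤ := ENNReal.ofReal_ne_top
  have hms : ∀ r, MeasurableSet (Ω ∩ ball y r) := fun r => hΩ.measurableSet.inter measurableSet_ball
  have hcmp : ∀ x ∈ Ω ∩ ball y R, h ≤ 2 * infDist x S ∧ infDist x S ≤ 2 * h :=
    fun x hx => eta_cmp hκ1 (mem_ball.1 hx.2)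
  set B := ∫⁻ x in ball y R, (KF Ω S (m - 1) (-1) (laplaceOp u) x + KF Ω S 0 1 u x) with hB
  have hBe : B = (∑ β ∈ multiIndicesLE n (m - 1),
      ∫⁻ x in Ω ∩ ball y R, KT S (-1) (laplaceOp u) β x) +
      ∑ β ∈ multiIndicesLE n 0, ∫⁻ x in Ω ∩ ball y R, KT S 1 u β x := by
    rw [hB, lintegral_add_left (KF_meas hΩ hη hlap _ _), setKF hΩ hη hlap, setKF hΩ hη hu]
  have hB1 : ∀ β ∈ multiIndicesLE n (m - 1),
      ∫⁻ x in Ω ∩ ball y R, KT S (-1) (laplaceOp u) β x ≤ B := by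
    intro β hβ
    rw [hBe]
    exact (Finset.single_le_sum (f := fun β => ∫⁻ x in Ω ∩ ball y R, KT S (-1) (laplaceOp u) β x)
      (fun _ _ => zero_le) hβ).trans le_self_add
  have hB2 : ∀ β ∈ multiIndicesLE n 0, ∫⁻ x in Ω ∩ ball y R, KT S 1 u β x ≤ B := by
    intro β hβ
    rw [hBe]
    exact (Finset.single_le_sum (f := fun β => ∫⁻ x in Ω ∩ ball y R, KT S 1 u β x)
      (fun _ _ => zero_le) hβ).trans le_add_self
  have hloc := hC Ω hΩ hfc ν c hν y R hR0 hfl u hu huc hu0 (A' * (a * B)) ?_ ?_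
  · rw [setKF hΩ hη hu]
    have hterm : ∀ β ∈ multiIndicesLE n (m + 1),
        ∫⁻ x in Ω ∩ ball y (R / 2), KT S 1 u β x ≤ A' * (C * A') * B := by
      intro β hβ
      have hβ' := mem_mi.1 hβ
      have h1 := hloc (Lb β) (by rw [Lb_length]; exact hβ')
      rw [Lb_length] at h1
      have h2 : a * ∫⁻ x in Ω ∩ ball y (R / 2), KT S 1 u β x ≤
          A' * (a ^ (∑ i, β i) * I2 volume (Ω ∩ ball y (R / 2)) (derivAlong (Lb β) u)) := by
        unfold I2
        rw [← lintegral_const_mul' _ _ hat, ← lintegral_const_mul' _ _ (ENNReal.pow_ne_top hat),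
          ← lintegral_const_mul' _ _ ENNReal.coe_ne_top]
        refine setLIntegral_mono' (hms _) fun x hx => ?_
        have hx' : x ∈ Ω ∩ ball y R := ⟨hx.1, ball_subset_ball (by linarith) hx.2⟩
        obtain ⟨c1, c2⟩ := hcmp x hx'
        have := wt_aux hκ hκ1 hy c1 c2 (m + 1) _ hβ'
        unfold KT
        rw [← hAA, ha, ← ENNReal.ofReal_pow (by positivity), ← ENNReal.ofReal_mul (by positivity),
          ← ENNReal.ofReal_mul (by positivity), ← ENNReal.ofReal_mul (by positivity),
          ← mul_assoc, ← mul_assoc]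
        refine ENNReal.ofReal_le_ofReal ?_
        exact mul_le_mul_of_nonneg_right this (sq_nonneg _)
      have h3 : a * ∫⁻ x in Ω ∩ ball y (R / 2), KT S 1 u β x ≤ a * (A' * (C * A') * B) := by
        refine h2.trans ?_
        calc _ ≤ (A' : ℝ≥0∞) * (C * (A' * (a * B))) := by gcongr
          _ = _ := by ring
      exact (ENNReal.mul_le_mul_iff_right ha0 hat).1 h3
    refine (Finset.sum_le_sum hterm).trans ?_
    rw [Finset.sum_const, nsmul_eq_mul]
    push_cast
    rw [hN]
    push_cast
    exact le_of_eq (mul_assoc _ _ _).symm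
  · have h0 : (0 : Fin n → ℕ) ∈ multiIndicesLE n 0 := mem_mi.2 (by simp)
    refine le_trans ?_ (mul_le_mul_right (mul_le_mul_right (hB2 0 h0) a) (A' : ℝ≥0∞))
    unfold I2
    rw [← lintegral_const_mul' _ _ hat, ← lintegral_const_mul' _ _ ENNReal.coe_ne_top]
    refine setLIntegral_mono' (hms _) fun x hx => ?_
    obtain ⟨c1, c2⟩ := hcmp x hx
    have := wt_aux3 hκ hκ1 hy c1 c2 (m + 1) (by omega)
    have e0 : pderivMulti (0 : Fin n → ℕ) u = u := by
      have : Lb (0 : Fin n → ℕ) = [] := by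
        rw [← List.length_eq_zero_iff, Lb_length]
        simp
      change derivAlong (Lb (0 : Fin n → ℕ)) u = u
      rw [this]
      rfl
    unfold KT
    rw [e0, ← hAA, ha, ← ENNReal.ofReal_mul (by positivity), ← ENNReal.ofReal_mul (by positivity)]
    refine ENNReal.ofReal_le_ofReal ?_
    have h5 := mul_le_mul_of_nonneg_right this (sq_nonneg (u x))
    rw [one_mul] at h5
    simp only [Pi.zero_apply, Finset.sum_const_zero]
    refine h5.trans (le_of_eq ?_)
    rw [hA, hR]
    ring
  · intro L hL
    have hm : (fun i => L.count i) ∈ multiIndicesLE n (m - 1) :=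
      mem_mi.2 (by rw [sum_count]; exact hL)
    refine le_trans ?_ (mul_le_mul_left hA'1 (a * B))
    rw [one_mul]
    refine le_trans ?_ (mul_le_mul_right (hB1 _ hm) a)
    rw [I2_congr volume (hms R) ((derivAlong_eqOn hΩ hlap L).mono inter_subset_left)]
    unfold I2
    rw [← lintegral_const_mul' _ _ hat, ← lintegral_const_mul' _ _ (ENNReal.pow_ne_top hat)]
    refine setLIntegral_mono' (hms _) fun x hx => ?_
    obtain ⟨c1, c2⟩ := hcmp x hx
    have := wt_aux2 hκ hκ1 hy c1 L.length
    unfold KT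
    rw [sum_count, ha, ← ENNReal.ofReal_pow (by positivity), ← ENNReal.ofReal_mul (by positivity),
      ← ENNReal.ofReal_mul (by positivity), ← mul_assoc]
    refine ENNReal.ofReal_le_ofReal ?_
    exact mul_le_mul_of_nonneg_right this (sq_nonneg _)

end final
end KR

/-- Regularity estimate in Babuška–Kondratiev spaces on a polyhedral domain:
`‖u‖_{K^{μ+1}_1} ≤ C (‖Δu‖_{K^{μ-1}_{-1}} + ‖u‖_{K^0_1})` for functions vanishing on the
boundary. -/
theorem kondratiev_regularity {n : ℕ} (hn : 2 ≤ n)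
    (Ω : Set (EuclideanSpace ℝ (Fin n))) (𝓗 : Finset (Set (EuclideanSpace ℝ (Fin n))))
    (hΩ : IsPolyhedralDomain Ω 𝓗) (hS : (polySingularSet Ω 𝓗).Nonempty)
    (μ : ℕ) (hμ : 1 ≤ μ) :
    ∃ C : ℝ, 0 < C ∧ ∀ u : EuclideanSpace ℝ (Fin n) → ℝ,
      ContDiffOn ℝ (⊤ : ℕ∞) u Ω → ContinuousOn u (closure Ω) →
      (∀ x ∈ frontier Ω, u x = 0) →
      KnormSq Ω (polySingularSet Ω 𝓗) 1 1 u < ⊤ →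
      KnormSq Ω (polySingularSet Ω 𝓗) (μ - 1) (-1) (laplaceOp u) < ⊤ →
      KnormSq Ω (polySingularSet Ω 𝓗) (μ + 1) 1 u < ⊤ ∧
      (KnormSq Ω (polySingularSet Ω 𝓗) (μ + 1) 1 u) ^ (1 / 2 : ℝ) ≤
        ENNReal.ofReal C *
          ((KnormSq Ω (polySingularSet Ω 𝓗) (μ - 1) (-1) (laplaceOp u)) ^ (1 / 2 : ℝ) +
            (KnormSq Ω (polySingularSet Ω 𝓗) 0 1 u) ^ (1 / 2 : ℝ)) := by
  classical
  have hh : ∀ i : {H // H ∈ 𝓗}, ∃ (v : EuclideanSpace ℝ (Fin n)) (c : ℝ), v ≠ 0 ∧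
      (i : Set (EuclideanSpace ℝ (Fin n))) = {x | ⟪v, x⟫ = c} := fun i => hΩ.hyperplane i.1 i.2
  choose v c hv hH using hh
  have hmem : ∀ (i : {H // H ∈ 𝓗}) (x : EuclideanSpace ℝ (Fin n)),
      KR.ell v c i x = 0 ↔ x ∈ (i : Set (EuclideanSpace ℝ (Fin n))) := by
    intro i x
    rw [hH i]
    exact sub_eq_zero
  have hSing : polySingularSet Ω 𝓗 = KR.Sing v c (frontier Ω) := by
    ext x
    constructor
    · rintro ⟨hx, H₁, h1, H₂, h2, hne, hx1, hx2⟩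
      refine ⟨hx, ⟨H₁, h1⟩, ⟨H₂, h2⟩, fun h => hne (congrArg Subtype.val h), ?_, ?_⟩
      · exact (hmem ⟨H₁, h1⟩ x).2 hx1
      · exact (hmem ⟨H₂, h2⟩ x).2 hx2
    · rintro ⟨hx, i, j, hij, hi, hj⟩
      exact ⟨hx, i.1, i.2, j.1, j.2, fun h => hij (Subtype.ext h), (hmem i x).1 hi, (hmem j x).1 hj⟩
  have hF : ∀ x ∈ frontier Ω, ∃ i, KR.ell v c i x = 0 := by
    intro x hx
    have := hΩ.subset_union hx
    simp only [mem_iUnion, exists_prop] at this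
    obtain ⟨H, h1, h2⟩ := this
    exact ⟨⟨H, h1⟩, (hmem _ x).2 h2⟩
  rw [hSing] at hS
  obtain ⟨κ, hκ, hκ1, hfl⟩ := KR.flat hv hΩ.isOpen hΩ.isBounded hΩ.frontier_closure hF hS
  rw [← hSing] at hfl hS
  have hclosed : IsClosed (polySingularSet Ω 𝓗) := by
    rw [hSing]
    exact KR.Sing_closed v c isClosed_frontier
  set S := polySingularSet Ω 𝓗 with hSdef
  have hη : ∀ x ∈ Ω, 0 < infDist x S := by
    intro x hx
    refine (hclosed.notMem_iff_infDist_pos hS).1 fun hxS => ?_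
    have h1 := hxS.1
    rw [hΩ.isOpen.frontier_eq] at h1
    exact h1.2 hx
  obtain ⟨C, hC⟩ := KR.main_sq (S := S) (by omega) hΩ.isOpen hΩ.frontier_closure hη hκ hκ1
    (fun y => by
      obtain ⟨i, hi⟩ := hfl y
      exact ⟨v i, c i, hv i, fun x hx hxf => sub_eq_zero.1 (hi x hx hxf)⟩) μ
  refine ⟨(C : ℝ) ^ (1 / 2 : ℝ) + 1, by positivity, fun u hu huc hu0 h1 h2 => ?_⟩
  have hmain := hC u hu huc hu0
  have h0 : KnormSq Ω S 0 1 u < ⊤ := by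
    refine lt_of_le_of_lt ?_ h1
    unfold KnormSq
    refine Finset.sum_le_sum_of_subset fun β hβ => ?_
    rw [KR.mem_mi] at hβ ⊢
    omega
  refine ⟨hmain.trans_lt (ENNReal.mul_lt_top ENNReal.coe_lt_top (ENNReal.add_lt_top.2 ⟨h2, h0⟩)), ?_⟩
  have hhalf : (0 : ℝ) ≤ 1 / 2 := by norm_num
  refine (ENNReal.rpow_le_rpow hmain hhalf).trans ?_
  rw [ENNReal.mul_rpow_of_nonneg _ _ hhalf]
  refine mul_le_mul' ?_ (ENNReal.rpow_add_le_add_rpow _ _ hhalf (by norm_num))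
  rw [← ENNReal.ofReal_coe_nnreal, ENNReal.ofReal_rpow_of_nonneg C.coe_nonneg hhalf]
  exact ENNReal.ofReal_le_ofReal (by linarith)
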